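/- arXiv:1503.01284 — 2 statements merged into one kernel-verified Lean document; each statement's English description precedes it below -/
import Mathlib

section
/- Let n ≥ 2, let E ⊂ ℝⁿ be a non-empty Borel set with dim_H E > 1, and let A ⊂ ℝⁿ be a Borel set such that for every p ∈ E the intersection L(p) ∩ A has positive (n−1)-dimensional measure (i.e. 𝓗^{n−1}(L(p) ∩ A) > 0). Then 𝓛ⁿ(L(E) ∩ A) > 0. -/
open MeasureTheory RealInnerProductSpace

/-- The non-vertical hyperplane `L(a,b) = {(x,y) : y = a·x + b}` in `ℝⁿ = ℝ^{n−1} × ℝ`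
associated to the point `p = (a,b)`. -/
def hyperplane {n : ℕ} (p : EuclideanSpace ℝ (Fin (n - 1)) × ℝ) :
    Set (EuclideanSpace ℝ (Fin (n - 1)) × ℝ) :=
  {q | q.2 = ⟪p.1, q.1⟫ + p.2}

/-- `L(E) = ⋃_{p ∈ E} L(p)`, the union of the hyperplanes parametrized by `E`. -/
def hyperplaneUnion {n : ℕ} (E : Set (EuclideanSpace ℝ (Fin (n - 1)) × ℝ)) :
    Set (EuclideanSpace ℝ (Fin (n - 1)) × ℝ) :=
  ⋃ p ∈ E, hyperplane p

open Filter Metric Set Topology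
open scoped ENNReal Pointwise

/-!
Call `graphMap p ⁻¹' D` the slice of `D` by the hyperplane `L(p)`. The heart of the matter is
Córdoba's `L²` argument: if the slices of `D` by all `p ∈ S` have measure at least `τ`, then the
`δ`-neighbourhood of `D` has measure at least a constant times `hausdorffContent s S * τ ^ 2`, for
every `s > 1` and with a constant independent of `δ`. Indeed, integrate the indicators of the
`δ`-neighbourhoods of the `L(p)` against a measure on `S` that satisfies Frostman's condition of
exponent `s` at all scales above `δ`, and apply the Cauchy–Schwarz inequality. Two of these
neighbourhoods meet in a set of measure `O(δ ^ 2 / (δ + ‖p - q‖))`, and the kernel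
`1 / (δ + ‖p - q‖)` has bounded energy because `s > 1`.

If `L(E) ∩ A` were null, it would be covered by compact sets `D j`, closed annuli inside a small
open superset, that have neighbourhoods of measure as small as desired. Given any positive sequence
with small sum, for every `p ∈ E` some slice by `L(p)` of a `D j` exceeds the `j`-th term; countable
subadditivity of the content then forces `dimH E ≤ 1`.
-/

section Frostman

/-- The `s`-dimensional Hausdorff content: the infimum of `∑ (diam tᵢ) ^ s` over all countable
covers `tᵢ`, with no bound on the diameters. It has the same null sets as `μH[s]` for `s > 0`, but
is finite on bounded sets. The empty set costs `0` even when `s = 0`. -/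
noncomputable def hausdorffContent {X : Type*} [PseudoEMetricSpace X] (s : ℝ) : OuterMeasure X :=
  .boundedBy fun t => ediam t ^ s

theorem hausdorffMeasure_eq_zero_of_hausdorffContent_eq_zero {X : Type*} [EMetricSpace X]
    [MeasurableSpace X] [BorelSpace X] {s : ℝ} (hs : 0 < s) {S : Set X}
    (hS : hausdorffContent s S = 0) : μH[s] S = 0 := by
  rw [Measure.hausdorffMeasure_apply, ← nonpos_iff_eq_zero]
  refine iSup₂_le fun r hr => le_of_forall_gt_imp_ge_of_dense fun ε hε => ?_
  have hlt : hausdorffContent s S < min ε (r ^ s) := by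
    simpa [hS, hε, hs.le] using ENNReal.rpow_pos_of_nonneg hr hs.le
  simp only [hausdorffContent, OuterMeasure.boundedBy_apply, iInf_lt_iff] at hlt
  obtain ⟨t, hSt, ht⟩ := hlt
  have hdiam (n : ℕ) : ediam (t n) ≤ r := by
    rcases (t n).eq_empty_or_nonempty with hn | hn
    · simp [hn]
    · rw [← ENNReal.rpow_le_rpow_iff hs]
      calc ediam (t n) ^ s = ⨆ _ : (t n).Nonempty, ediam (t n) ^ s := by simp [hn]
        _ ≤ ∑' n, ⨆ _ : (t n).Nonempty, ediam (t n) ^ s := ENNReal.le_tsum n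
        _ ≤ r ^ s := ht.le.trans (min_le_right _ _)
  exact iInf_le_of_le t <| iInf₂_le_of_le hSt hdiam <| ht.le.trans (min_le_left _ _)

variable {X : Type*} [MetricSpace X]

theorem hausdorffContent_closedBall_le {s : ℝ} (hs : 0 ≤ s) (x : X) (r : ℝ) :
    hausdorffContent s (closedBall x r) ≤ (2 * ENNReal.ofReal r) ^ s := by
  refine (OuterMeasure.boundedBy_le _).trans (ENNReal.rpow_le_rpow (ediam_le ?_) hs)
  intro y hy z hz
  rw [two_mul, ← ENNReal.ofReal_toReal (edist_ne_top y z), ← dist_edist]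
  exact (ENNReal.ofReal_le_ofReal ((dist_triangle_right y z x).trans (add_le_add hy hz))).trans
    ENNReal.ofReal_add_le

theorem hausdorffContent_le_of_closedBall_cover [MeasurableSpace X] [OpensMeasurableSpace X]
    {ι : Type*} {s : ℝ} (hs : 0 ≤ s) {S : Set X} (ν : Measure X) {I : Set ι} (hI : I.Countable)
    {x : ι → X} {r : ι → ℝ} {R : ℝ} (hR : ∀ i ∈ I, r i ≤ R)
    (hcov : S ⊆ ⋃ i ∈ I, closedBall (x i) (r i))
    (hν : ∀ i ∈ I, ENNReal.ofReal (r i) ^ s ≤ ν (closedBall (x i) (r i))) :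
    hausdorffContent s S ≤ 10 ^ s * ν univ := by
  obtain ⟨J, hJI, hdisj, hJ⟩ :=
    Vitali.exists_disjoint_subfamily_covering_enlargement_closedBall I x r R hR 5 (by norm_num)
  have hJc : J.Countable := hI.mono hJI
  have hScov : S ⊆ ⋃ i ∈ J, closedBall (x i) (5 * r i) := fun y hy => by
    obtain ⟨i, hi, hyi⟩ := mem_iUnion₂.1 (hcov hy)
    obtain ⟨j, hj, hij⟩ := hJ i hi
    exact mem_iUnion₂.2 ⟨j, hj, hij hyi⟩
  have hball (i : J) : hausdorffContent s (closedBall (x i) (5 * r i)) ≤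
      10 ^ s * ν (closedBall (x i) (r i)) :=
    calc hausdorffContent s (closedBall (x i) (5 * r i))
        ≤ (2 * ENNReal.ofReal (5 * r i)) ^ s := hausdorffContent_closedBall_le hs _ _
      _ = 10 ^ s * ENNReal.ofReal (r i) ^ s := by
        rw [ENNReal.ofReal_mul (by norm_num), ← mul_assoc, ENNReal.mul_rpow_of_nonneg _ _ hs]
        norm_num
      _ ≤ 10 ^ s * ν (closedBall (x i) (r i)) := by gcongr; exact hν i (hJI i.2)
  calc hausdorffContent s S
      ≤ ∑' i : J, hausdorffContent s (closedBall (x i) (5 * r i)) :=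
        (measure_mono hScov).trans (measure_biUnion_le _ hJc _)
    _ ≤ ∑' i : J, 10 ^ s * ν (closedBall (x i) (r i)) := ENNReal.tsum_le_tsum hball
    _ = 10 ^ s * ν (⋃ i ∈ J, closedBall (x i) (r i)) := by
      rw [ENNReal.tsum_mul_left, measure_biUnion hJc hdisj fun _ _ => measurableSet_closedBall]
    _ ≤ 10 ^ s * ν univ := by gcongr; exact subset_univ _

-- Points are charged one at a time, each with the largest mass that keeps every capacity.
theorem exists_measure_saturating {Y ι : Type*} [MeasurableSpace Y] [MeasurableSingletonClass Y]
    (T : Finset Y) {I : Finset ι} {B : ι → Set Y} {κ : ι → ℝ≥0∞}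
    (hκ : ∀ c ∈ I, κ c ≠ ∞) (hcov : ∀ p ∈ T, ∃ c ∈ I, p ∈ B c) :
    ∃ ν : Measure Y, IsFiniteMeasure ν ∧ (∀ᵐ p ∂ν, p ∈ T) ∧ (∀ c ∈ I, ν (B c) ≤ κ c) ∧
      ∀ p ∈ T, ∃ c ∈ I, p ∈ B c ∧ ν (B c) = κ c := by
  classical
  induction T using Finset.induction_on with
  | empty => exact ⟨0, inferInstance, by simp⟩
  | insert a T _ ih =>
    obtain ⟨ν, hνfin, hνT, hνκ, hνsat⟩ := ih fun p hp => hcov p (Finset.mem_insert_of_mem hp)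
    obtain ⟨c₀, hc₀, hac₀⟩ := hcov a (Finset.mem_insert_self a T)
    obtain ⟨c, hc, hmin⟩ := (I.filter (a ∈ B ·)).exists_min_image (fun c => κ c - ν (B c))
      ⟨c₀, Finset.mem_filter.2 ⟨hc₀, hac₀⟩⟩
    simp only [Finset.mem_filter] at hc hmin
    have hmass (c' : ι) (σ : ℝ≥0∞) :
        (ν + σ • Measure.dirac a) (B c') = ν (B c') + if a ∈ B c' then σ else 0 := by
      simp [indicator_apply]
    have hle (c' : ι) (hc' : c' ∈ I) :
        (ν + (κ c - ν (B c)) • Measure.dirac a) (B c') ≤ κ c' := by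
      rw [hmass]
      split_ifs with ha
      · exact (add_le_add_right (hmin c' ⟨hc', ha⟩) _).trans_eq (add_tsub_cancel_of_le (hνκ c' hc'))
      · simpa using hνκ c' hc'
    have hσfin : IsFiniteMeasure ((κ c - ν (B c)) • Measure.dirac a) :=
      Measure.smul_finite _ (ENNReal.sub_ne_top (hκ c hc.1))
    refine ⟨ν + (κ c - ν (B c)) • Measure.dirac a, inferInstance, ?_, hle, fun p hp => ?_⟩
    · refine ae_add_measure_iff.2 ⟨hνT.mono fun p hp => Finset.mem_insert_of_mem hp, ?_⟩
      exact Measure.ae_smul_measure (by simp [ae_dirac_eq]) _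
    · rcases Finset.mem_insert.1 hp with rfl | hp
      · exact ⟨c, hc.1, hc.2, by rw [hmass, if_pos hc.2, add_tsub_cancel_of_le (hνκ c hc.1)]⟩
      · obtain ⟨c', hc', hpc', hsat⟩ := hνsat p hp
        refine ⟨c', hc', hpc', (hle c' hc').antisymm ?_⟩
        rw [hmass, hsat]
        exact le_self_add

theorem exists_frostman_measure [MeasurableSpace X] [OpensMeasurableSpace X] {s : ℝ} (hs : 0 ≤ s)
    {S : Set X} (hS : TotallyBounded S) (m : ℕ) :
    ∃ ν : Measure X, IsFiniteMeasure ν ∧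
      (∀ᵐ p ∂ν, p ∈ S ∧ ∀ i ≤ m, ν (closedBall p (2⁻¹ ^ i)) ≤ (2⁻¹ ^ i) ^ s) ∧
      hausdorffContent s S ≤ 20 ^ s * ν univ := by
  obtain ⟨T, hTS, hTfin, hST⟩ := finite_approx_of_totallyBounded hS (2⁻¹ ^ m) (by positivity)
  lift T to Finset X using hTfin
  obtain ⟨ν, hνfin, hνT, hνle, hνsat⟩ := exists_measure_saturating T
    (I := T ×ˢ Finset.range (m + 1)) (B := fun c => closedBall c.1 (2⁻¹ ^ c.2))
    (κ := fun c => (2⁻¹ ^ c.2) ^ s) (fun c _ => by simp)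
    fun p hp => ⟨(p, 0), by simp [hp], by simp⟩
  have hfrostman (p : X) (hp : p ∈ T) (i : ℕ) (hi : i ≤ m) :
      ν (closedBall p (2⁻¹ ^ i)) ≤ (2⁻¹ ^ i) ^ s :=
    hνle (p, i) (by simp [hp, Nat.lt_succ_of_le hi])
  refine ⟨ν, hνfin, hνT.mono fun p hp => ⟨hTS hp, hfrostman p hp⟩, ?_⟩
  let I : Set (X × ℕ) := {c | c ∈ T ×ˢ Finset.range (m + 1) ∧
    ν (closedBall c.1 (2⁻¹ ^ c.2)) = (2⁻¹ ^ c.2) ^ s}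
  have hIfin : I.Finite := (Finset.finite_toSet _).subset fun c hc => hc.1
  have hcov : S ⊆ ⋃ c ∈ I, closedBall c.1 (2 * 2⁻¹ ^ c.2) := fun x hx => by
    obtain ⟨p, hp, hxp⟩ := mem_iUnion₂.1 (hST hx)
    obtain ⟨c, hc, hpc, hsat⟩ := hνsat p hp
    have hcm : c.2 ≤ m := by simpa [Nat.lt_succ_iff] using (Finset.mem_product.1 hc).2
    refine mem_iUnion₂.2 ⟨c, ⟨hc, hsat⟩, (dist_triangle x p c.1).trans ?_⟩
    rw [two_mul]
    exact add_le_add ((mem_ball.1 hxp).le.trans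
      (pow_le_pow_of_le_one (by norm_num) (by norm_num) hcm)) hpc
  have hsat (c : X × ℕ) (hc : c ∈ I) : ENNReal.ofReal (2 * 2⁻¹ ^ c.2) ^ s ≤
      ((2 : ℝ≥0∞) ^ s • ν) (closedBall c.1 (2 * 2⁻¹ ^ c.2)) := by
    rw [ENNReal.ofReal_mul (by norm_num), ENNReal.mul_rpow_of_nonneg _ _ hs,
      ENNReal.ofReal_pow (by norm_num), ENNReal.ofReal_inv_of_pos (by norm_num)]
    simp only [ENNReal.ofReal_ofNat, Measure.smul_apply, smul_eq_mul, ← hc.2]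
    gcongr
    exact le_mul_of_one_le_left (by positivity) (by norm_num)
  calc hausdorffContent s S
      ≤ 10 ^ s * ((2 : ℝ≥0∞) ^ s • ν) univ :=
        hausdorffContent_le_of_closedBall_cover hs _ hIfin.countable (R := 2)
          (fun c _ => mul_le_of_le_one_right zero_le_two (pow_le_one₀ (by norm_num) (by norm_num)))
          hcov hsat
    _ = 20 ^ s * ν univ := by
      rw [Measure.smul_apply, smul_eq_mul, ← mul_assoc, ← ENNReal.mul_rpow_of_nonneg _ _ hs]
      norm_num

end Frostman

theorem le_two_inv_pow_mul_sum_of_mul_edist_le {X : Type*} [PseudoMetricSpace X] {p q : X}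
    (hpq : dist p q ≤ 1) {a M : ℝ≥0∞} {m : ℕ} (ha : a ≤ M)
    (had : a * edist p q ≤ M * 2⁻¹ ^ m) :
    a ≤ M * 2⁻¹ ^ m *
      ∑ i ∈ Finset.range (m + 1), (closedBall q (2⁻¹ ^ i)).indicator (fun _ => 2 ^ (i + 1)) p := by
  suffices ∃ i ≤ m, dist p q ≤ 2⁻¹ ^ i ∧ a ≤ M * 2⁻¹ ^ m * 2 ^ (i + 1) by
    obtain ⟨i, him, hi, hai⟩ := this
    refine hai.trans (mul_le_mul_right ?_ _)
    refine le_of_eq_of_le ?_ (Finset.single_le_sum (fun _ _ => zero_le)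
      (Finset.mem_range_succ_iff.2 him))
    rw [indicator_of_mem (mem_closedBall.2 hi)]
  have hcancel (k : ℕ) : (2⁻¹ : ℝ≥0∞) ^ k * 2 ^ k = 1 := by
    rw [← mul_pow, ENNReal.inv_mul_cancel two_ne_zero ENNReal.ofNat_ne_top, one_pow]
  by_cases hm : dist p q ≤ 2⁻¹ ^ m
  · refine ⟨m, le_rfl, hm, ha.trans ?_⟩
    rw [mul_assoc, pow_succ, ← mul_assoc (2⁻¹ ^ m), hcancel, one_mul]
    exact le_mul_of_one_le_right' one_le_two
  · rw [not_le] at hm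
    obtain ⟨i, hi, hi'⟩ := exists_nat_pow_near_of_lt_one
      ((by positivity : (0 : ℝ) < 2⁻¹ ^ m).trans hm) hpq (by norm_num : (0 : ℝ) < 2⁻¹) (by norm_num)
    have him : i < m :=
      (pow_lt_pow_iff_right_of_lt_one₀ (by norm_num) (by norm_num)).1 (hm.trans_le hi')
    have hdist : (2⁻¹ : ℝ≥0∞) ^ (i + 1) ≤ edist p q := by
      rw [edist_dist, ← ENNReal.ofReal_ofNat, ← ENNReal.ofReal_inv_of_pos (by norm_num),
        ← ENNReal.ofReal_pow (by norm_num)]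
      exact ENNReal.ofReal_le_ofReal hi.le
    refine ⟨i, him.le, hi', ?_⟩
    calc a = a * 2⁻¹ ^ (i + 1) * 2 ^ (i + 1) := by rw [mul_assoc, hcancel, mul_one]
      _ ≤ a * edist p q * 2 ^ (i + 1) := by gcongr
      _ ≤ M * 2⁻¹ ^ m * 2 ^ (i + 1) := by gcongr

theorem lintegral_le_of_measure_closedBall_le {X : Type*} [PseudoMetricSpace X]
    [MeasurableSpace X] [OpensMeasurableSpace X] {ν : Measure X} {q : X} {θ : ℝ≥0∞} {m : ℕ}
    (hν : ∀ i ≤ m, ν (closedBall q (2⁻¹ ^ i)) ≤ θ ^ i) (hdist : ∀ᵐ p ∂ν, dist p q ≤ 1)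
    {g : X → ℝ≥0∞} {M : ℝ≥0∞} (hg : ∀ p, g p ≤ M) (hgd : ∀ p, g p * edist p q ≤ M * 2⁻¹ ^ m) :
    ∫⁻ p, g p ∂ν ≤ M * 2⁻¹ ^ m * (2 * (1 - 2 * θ)⁻¹) := by
  have hmeas (i : ℕ) :
      Measurable ((closedBall q (2⁻¹ ^ i)).indicator fun _ => (2 : ℝ≥0∞) ^ (i + 1)) :=
    measurable_const.indicator measurableSet_closedBall
  calc ∫⁻ p, g p ∂ν
      ≤ ∫⁻ p, M * 2⁻¹ ^ m * ∑ i ∈ Finset.range (m + 1),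
          (closedBall q (2⁻¹ ^ i)).indicator (fun _ => 2 ^ (i + 1)) p ∂ν :=
        lintegral_mono_ae (hdist.mono fun p hp =>
          le_two_inv_pow_mul_sum_of_mul_edist_le hp (hg p) (hgd p))
    _ = M * 2⁻¹ ^ m * ∑ i ∈ Finset.range (m + 1), 2 ^ (i + 1) * ν (closedBall q (2⁻¹ ^ i)) := by
      rw [lintegral_const_mul _ (Finset.measurable_fun_sum _ fun i _ => hmeas i),
        lintegral_finsetSum _ fun i _ => hmeas i]
      simp only [lintegral_indicator_const measurableSet_closedBall]
    _ ≤ M * 2⁻¹ ^ m * ∑ i ∈ Finset.range (m + 1), 2 * (2 * θ) ^ i := by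
      refine mul_le_mul_right (Finset.sum_le_sum fun i hi => ?_) _
      rw [mul_pow, pow_succ', mul_assoc]
      gcongr
      exact hν i (Finset.mem_range_succ_iff.1 hi)
    _ ≤ M * 2⁻¹ ^ m * (2 * (1 - 2 * θ)⁻¹) := by
      rw [← Finset.mul_sum, ← ENNReal.tsum_geometric]
      gcongr
      exact ENNReal.sum_le_tsum _

theorem sq_setLIntegral_le {X : Type*} [MeasurableSpace X] (μ : Measure X) (D : Set X)
    {h : X → ℝ≥0∞} (hh : AEMeasurable h μ) :
    (∫⁻ x in D, h x ∂μ) ^ 2 ≤ μ D * ∫⁻ x, h x ^ 2 ∂μ := by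
  have hholder := ENNReal.lintegral_mul_le_Lp_mul_Lq (μ.restrict D) .two_two
    (aemeasurable_const (b := 1)) hh.restrict
  simp only [Pi.mul_apply, one_mul, one_pow, lintegral_const, Measure.restrict_apply_univ,
    ENNReal.rpow_ofNat] at hholder
  calc (∫⁻ x in D, h x ∂μ) ^ 2
      ≤ (μ D ^ (1 / 2 : ℝ) * (∫⁻ x in D, h x ^ 2 ∂μ) ^ (1 / 2 : ℝ)) ^ 2 := by gcongr
    _ = μ D * ∫⁻ x in D, h x ^ 2 ∂μ := by
      simp [mul_pow, ← ENNReal.rpow_mul_natCast]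
    _ ≤ μ D * ∫⁻ x, h x ^ 2 ∂μ := by gcongr; exact Measure.restrict_le_self

theorem sq_lintegral_measure_inter_le {P X : Type*} [MeasurableSpace P] [MeasurableSpace X]
    (ν : Measure P) [SFinite ν] (μ : Measure X) [SFinite μ] (D : Set X) {Z : Set (P × X)}
    (hZ : MeasurableSet Z) :
    (∫⁻ p, μ (Prod.mk p ⁻¹' Z ∩ D) ∂ν) ^ 2 ≤
      μ D * ∫⁻ q, ∫⁻ p, μ (Prod.mk p ⁻¹' Z ∩ Prod.mk q ⁻¹' Z) ∂ν ∂ν := by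
  let h : X → ℝ≥0∞ := fun x => ν ((·, x) ⁻¹' Z)
  have hfirst : ∫⁻ p, μ (Prod.mk p ⁻¹' Z ∩ D) ∂ν = ∫⁻ x in D, h x ∂μ := by
    rw [← Measure.prod_apply_symm hZ, Measure.prod_apply hZ]
    simp only [Measure.restrict_apply (measurable_prodMk_left hZ)]
  let W : Set ((P × P) × X) := {w | (w.1.1, w.2) ∈ Z ∧ (w.1.2, w.2) ∈ Z}
  have hW : MeasurableSet W :=
    (hZ.preimage (f := fun w : (P × P) × X => (w.1.1, w.2)) (by fun_prop)).inter
      (hZ.preimage (f := fun w : (P × P) × X => (w.1.2, w.2)) (by fun_prop))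
  have hsecond : ∫⁻ x, h x ^ 2 ∂μ =
      ∫⁻ q, ∫⁻ p, μ (Prod.mk p ⁻¹' Z ∩ Prod.mk q ⁻¹' Z) ∂ν ∂ν :=
    calc ∫⁻ x, h x ^ 2 ∂μ = ∫⁻ x, (ν.prod ν) ((·, x) ⁻¹' W) ∂μ := by
          refine lintegral_congr fun x => ?_
          rw [sq, ← Measure.prod_prod]
          rfl
      _ = ∫⁻ w, μ (Prod.mk w ⁻¹' W) ∂ν.prod ν := by
          rw [← Measure.prod_apply_symm hW, Measure.prod_apply hW]
      _ = ∫⁻ q, ∫⁻ p, μ (Prod.mk p ⁻¹' Z ∩ Prod.mk q ⁻¹' Z) ∂ν ∂ν :=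
          lintegral_prod_symm _ (measurable_measure_prodMk_left hW).aemeasurable
  rw [hfirst, ← hsecond]
  exact sq_setLIntegral_le μ D (measurable_measure_prodMk_right hZ).aemeasurable

theorem exists_pos_measure_setOf_le_lt {X : Type*} [MeasurableSpace X] {μ : Measure X} {U : Set X}
    (hU : MeasurableSet U) (hμU : μ U ≠ ∞) {f : X → ℝ≥0∞} (hf : Measurable f)
    (hfU : ∀ x ∈ U, f x ≠ 0) {ε : ℝ≥0∞} (hε : ε ≠ 0) {r : ℝ≥0∞} (hr : r ≠ 0) :
    ∃ t, t ≠ 0 ∧ t ≤ r ∧ μ {x ∈ U | f x ≤ t} < ε := by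
  have hempty : ⋂ t > (0 : ℝ≥0∞), {x ∈ U | f x ≤ t} = ∅ := by
    refine eq_empty_of_forall_notMem fun x hx => ?_
    simp only [mem_iInter, mem_ofPred_eq] at hx
    exact hfU x (hx 1 one_pos).1 (nonpos_iff_eq_zero.1
      (le_of_forall_gt_imp_ge_of_dense fun t ht => (hx t ht).2))
  have htendsto := tendsto_measure_biInter_gt (μ := μ) (a := 0) (s := fun t => {x ∈ U | f x ≤ t})
    (fun t _ => (hU.inter (measurableSet_le hf measurable_const)).nullMeasurableSet)
    (fun _ _ _ hst x hx => ⟨hx.1, hx.2.trans hst⟩)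
    ⟨1, one_pos, measure_ne_top_of_subset (sep_subset _ _) hμU⟩
  rw [hempty, measure_empty] at htendsto
  obtain ⟨t, htε, ht0, htr⟩ := ((htendsto.eventually (gt_mem_nhds hε.bot_lt)).and
    (Ioc_mem_nhdsGT hr.bot_lt)).exists
  exact ⟨t, ht0.ne', htr, htε⟩

theorem exists_isCompact_cover_measure_cthickening_lt {X : Type*} [MetricSpace X] [ProperSpace X]
    [MeasurableSpace X] [BorelSpace X] {μ : Measure X} [IsFiniteMeasureOnCompacts μ]
    {N K : Set X} (hK : IsCompact K) (hNK : N ⊆ K) (hN : μ N = 0)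
    {ε : ℕ → ℝ≥0∞} (hε : ∀ j, ε j ≠ 0) :
    ∃ (D : ℕ → Set X) (δ : ℕ → ℝ), N ⊆ ⋃ j, D j ∧
      ∀ j, IsCompact (D j) ∧ D j ⊆ K ∧ 0 < δ j ∧ μ (cthickening (δ j) (D j)) < ε j := by
  obtain ⟨U, hNU, hUo, hU⟩ := N.exists_isOpen_lt_of_lt (min 1 (ε 0))
    (hN.trans_lt (lt_min one_pos (hε 0).bot_lt))
  let f : X → ℝ≥0∞ := fun x => infEDist x Uᶜ
  have hf : Continuous f := continuous_infEDist
  have hfU (x : X) (hx : x ∈ U) : f x ≠ 0 := fun h =>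
    (mem_iff_infEDist_zero_of_closed hUo.isClosed_compl).2 h hx
  have hUfin : μ U ≠ ∞ := ((hU.trans_le (min_le_left _ _)).trans ENNReal.one_lt_top).ne
  choose t ht0 htj ht using fun j : ℕ =>
    exists_pos_measure_setOf_le_lt hUo.measurableSet hUfin hf.measurable hfU (hε (j + 1))
      (r := (j : ℝ≥0∞)⁻¹) (by simp)
  let D : ℕ → Set X := fun j => {x ∈ K | t j ≤ f x ∧ ∀ i < j, f x ≤ t i}
  have hDU (j : ℕ) : D j ⊆ U := fun x hx => by
    by_contra hxU
    exact ht0 j (nonpos_iff_eq_zero.1 (hx.2.1.trans_eq (infEDist_zero_of_mem hxU)))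
  have hDc (j : ℕ) : IsCompact (D j) := by
    have hclosed : IsClosed {x | ∀ i < j, f x ≤ t i} := by
      simp only [ofPred_forall]
      exact isClosed_iInter fun i => isClosed_iInter fun _ => isClosed_le hf continuous_const
    exact hK.inter_right ((isClosed_le continuous_const hf).inter hclosed)
  have hDε (j : ℕ) : μ (D j) < ε j := by
    match j with
    | 0 => exact (measure_mono (hDU 0)).trans_lt (hU.trans_le (min_le_right _ _))
    | j + 1 =>
      exact (measure_mono (t := {x ∈ U | f x ≤ t j})
        fun x hx => ⟨hDU _ hx, hx.2.2 j j.lt_succ_self⟩).trans_lt (ht j)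
  have hδ (j : ℕ) : ∃ δ > 0, μ (cthickening δ (D j)) < ε j :=
    ((nhdsGT_neBot 0).nonempty_of_mem (inter_mem self_mem_nhdsWithin
      (((tendsto_measure_cthickening_of_isCompact (hDc j)).eventually
        (gt_mem_nhds (hDε j))).filter_mono nhdsWithin_le_nhds)))
  choose δ hδ0 hδ using hδ
  refine ⟨D, δ, fun x hx => ?_, fun j => ⟨hDc j, sep_subset _ _, hδ0 j, hδ j⟩⟩
  have hex : ∃ j, t j ≤ f x :=
    (ENNReal.exists_inv_nat_lt (hfU x (hNU hx))).imp fun j hj => (htj j).trans hj.le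
  classical
  exact mem_iUnion.2 ⟨Nat.find hex, hNK hx, Nat.find_spec hex,
    fun i hi => (not_le.1 (Nat.find_min hex hi)).le⟩

theorem card_mul_measure_le_of_pairwiseDisjoint_vadd {G ι : Type*} [AddGroup G]
    [MeasurableSpace G] [MeasurableAdd G] (μ : Measure G) [μ.IsAddLeftInvariant] {s t : Set G}
    (hs : MeasurableSet s) {T : Finset ι} {g : ι → G}
    (hdisj : (T : Set ι).PairwiseDisjoint fun i => g i +ᵥ s) (hst : ∀ i ∈ T, g i +ᵥ s ⊆ t) :
    T.card * μ s ≤ μ t :=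
  calc T.card * μ s = ∑ i ∈ T, μ (g i +ᵥ s) := by
        simp only [measure_vadd, Finset.sum_const, nsmul_eq_mul]
    _ = μ (⋃ i ∈ T, g i +ᵥ s) :=
        (measure_biUnion_finset hdisj fun i _ => hs.const_vadd (g i)).symm
    _ ≤ μ t := measure_mono (iUnion₂_subset hst)

theorem prod_volume_regionBetween_sub_add {X : Type*} [MeasurableSpace X] (μ : Measure X)
    [SFinite μ] {f : X → ℝ} (hf : Measurable f) {G : Set X} (hG : MeasurableSet G) (δ : ℝ) :
    (μ.prod volume) (regionBetween (fun x => f x - δ) (fun x => f x + δ) G) =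
      ENNReal.ofReal (2 * δ) * μ G := by
  rw [volume_regionBetween_eq_lintegral (hf.sub_const δ).aemeasurable
    (hf.add_const δ).aemeasurable hG]
  simp [two_mul]

section Hyperplanes

variable {V : Type*} [NormedAddCommGroup V] [InnerProductSpace ℝ V]

/-- The affine form `x ↦ ⟪a, x⟫ + b` whose graph is the hyperplane dual to `p = (a, b)`. -/
def affineForm (p : V × ℝ) (x : V) : ℝ := ⟪p.1, x⟫ + p.2

/-- The parametrization over `V` of the hyperplane dual to `p`, so that `graphMap p ⁻¹' A` is the
slice of `A` by this hyperplane. -/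
def graphMap (p : V × ℝ) (x : V) : V × ℝ := (x, affineForm p x)

/-- The hyperplane dual to `p`, over an arbitrary inner product space; for Euclidean spaces it is
`hyperplane p`. -/
def affineGraph (p : V × ℝ) : Set (V × ℝ) := {q | q.2 = affineForm p q.1}

/-- The slab of points of the ball of radius `R` at which the affine form of `p` is smaller
than `δ` in absolute value. -/
def slab (p : V × ℝ) (R δ : ℝ) : Set V := {x ∈ closedBall 0 R | |affineForm p x| < δ}

/-- The vertical `δ`-neighbourhood of the hyperplane dual to `p` above the ball of radius `R`. -/
def graphBand (p : V × ℝ) (R δ : ℝ) : Set (V × ℝ) :=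
  regionBetween (fun x => affineForm p x - δ) (fun x => affineForm p x + δ) (closedBall 0 R)

theorem affineForm_sub (p q : V × ℝ) (x : V) :
    affineForm (p - q) x = affineForm p x - affineForm q x := by
  simp only [affineForm, Prod.fst_sub, Prod.snd_sub, inner_sub_left]
  ring

theorem continuous_affineForm : Continuous fun z : (V × ℝ) × V => affineForm z.1 z.2 := by
  unfold affineForm
  fun_prop

theorem lipschitzWith_graphMap (p : V × ℝ) : LipschitzWith (max 1 ‖p.1‖₊) (graphMap p) :=
  LipschitzWith.id.prodMk <| LipschitzWith.of_dist_le_mul fun x y => by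
    rw [Real.dist_eq, dist_eq_norm, affineForm, affineForm, add_sub_add_right_eq_sub,
      ← inner_sub_right]
    exact abs_real_inner_le_norm _ _

theorem pairwise_disjoint_vadd_slab {p : V × ℝ} {R δ : ℝ} {v : V} (hv : ⟪p.1, v⟫ = 2 * δ) :
    Pairwise (Function.onFun Disjoint fun k : ℕ => (k : ℝ) • v +ᵥ slab p R δ) := by
  have hform (k : ℕ) (x : V) : affineForm p ((k : ℝ) • v + x) = affineForm p x + k * (2 * δ) := by
    rw [affineForm, affineForm, inner_add_right, inner_smul_right, hv]
    ring
  refine (pairwise_disjoint_on _).2 fun j k hjk => Set.disjoint_left.2 ?_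
  rintro _ ⟨x, hx, rfl⟩ ⟨y, hy, hxy : (k : ℝ) • v + y = (j : ℝ) • v + x⟩
  have hval := congrArg (affineForm p) hxy
  rw [hform, hform] at hval
  have hx' := abs_lt.1 hx.2
  have hy' := abs_lt.1 hy.2
  have hstep : (j + 1 : ℝ) * (2 * δ) ≤ k * (2 * δ) := by
    gcongr
    · linarith
    · exact_mod_cast hjk
  linarith

theorem graphBand_inter_subset (p q : V × ℝ) (R δ : ℝ) :
    graphBand p R δ ∩ graphBand q R δ ⊆
      regionBetween (fun x => affineForm p x - δ) (fun x => affineForm p x + δ)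
        (slab (p - q) R (2 * δ)) := by
  rintro ⟨x, y⟩ ⟨⟨hx, hp⟩, -, hq⟩
  refine ⟨⟨hx, ?_⟩, hp⟩
  rw [affineForm_sub, abs_lt]
  simp only [mem_Ioo] at hp hq
  constructor <;> linarith

theorem mem_cthickening_of_graphMap_mem {p : V × ℝ} {D : Set (V × ℝ)} {δ : ℝ} {z : V × ℝ}
    (hz : |z.2 - affineForm p z.1| ≤ δ) (hD : graphMap p z.1 ∈ D) : z ∈ cthickening δ D :=
  mem_cthickening_of_dist_le _ _ _ _ hD (by
    simpa [graphMap, Prod.dist_eq, Real.dist_eq, (abs_nonneg _).trans hz] using hz)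

variable [MeasurableSpace V] [BorelSpace V]

theorem measurable_affineForm (p : V × ℝ) : Measurable (affineForm p) :=
  (continuous_affineForm.comp (Continuous.prodMk_right p)).measurable

theorem measurableSet_slab (p : V × ℝ) (R δ : ℝ) : MeasurableSet (slab p R δ) :=
  measurableSet_closedBall.inter
    (measurableSet_lt (measurable_affineForm p).abs measurable_const)

variable (μ : Measure V) [μ.IsAddLeftInvariant]

theorem measure_slab_mul_enorm_fst_le (p : V × ℝ) (R : ℝ) {δ : ℝ} (hδ : 0 < δ) :
    μ (slab p R δ) * ‖p.1‖ₑ ≤ μ (closedBall 0 (R + 1)) * (2 * ENNReal.ofReal δ) := by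
  rcases eq_or_ne p.1 0 with ha | ha
  · simp [ha]
  have hnorm : 0 < ‖p.1‖ := norm_pos_iff.2 ha
  let v : V := (2 * δ / ‖p.1‖ ^ 2) • p.1
  have hv : ⟪p.1, v⟫ = 2 * δ := by
    rw [inner_smul_right, real_inner_self_eq_norm_sq, div_mul_cancel₀ _ (by positivity)]
  let K : ℕ := ⌈‖p.1‖ / (2 * δ)⌉₊
  have hsub (k : ℕ) (hk : k ∈ Finset.range K) :
      (k : ℝ) • v +ᵥ slab p R δ ⊆ closedBall 0 (R + 1) := by
    rintro _ ⟨x, hx, rfl⟩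
    have hkv : ‖(k : ℝ) • v‖ ≤ 1 := by
      have hkK : k * (2 * δ) ≤ ‖p.1‖ :=
        ((lt_div_iff₀ (by positivity)).1 (Nat.lt_ceil.1 (Finset.mem_range.1 hk))).le
      rw [smul_smul, norm_smul, Real.norm_of_nonneg (by positivity)]
      field_simp
      linarith
    rw [mem_closedBall_zero_iff, add_comm R]
    exact (norm_add_le _ x).trans (add_le_add hkv (mem_closedBall_zero_iff.1 hx.1))
  calc μ (slab p R δ) * ‖p.1‖ₑ
      ≤ μ (slab p R δ) * (K * (2 * ENNReal.ofReal δ)) := by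
        gcongr
        rw [← ofReal_norm, ← ENNReal.ofReal_natCast, ← ENNReal.ofReal_ofNat,
          ← ENNReal.ofReal_mul (by norm_num), ← ENNReal.ofReal_mul (by positivity)]
        exact ENNReal.ofReal_le_ofReal ((div_le_iff₀ (by positivity)).1 (Nat.le_ceil _))
    _ = (Finset.range K).card * μ (slab p R δ) * (2 * ENNReal.ofReal δ) := by
        rw [Finset.card_range]; ring
    _ ≤ μ (closedBall 0 (R + 1)) * (2 * ENNReal.ofReal δ) := by
        gcongr
        exact card_mul_measure_le_of_pairwiseDisjoint_vadd μ (measurableSet_slab p R δ)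
          ((pairwise_disjoint_vadd_slab hv).set_pairwise _) hsub

theorem measure_slab_mul_enorm_le (p : V × ℝ) {R δ : ℝ} (hR : 1 ≤ R) (hδ : 0 < δ) :
    μ (slab p R δ) * ‖p‖ₑ ≤
      μ (closedBall 0 (R + 1)) * (2 * ENNReal.ofReal R + 1) * ENNReal.ofReal δ := by
  rcases (slab p R δ).eq_empty_or_nonempty with h | ⟨x, hx, hxδ⟩
  · simp [h]
  have hnorm : ‖p‖ ≤ R * ‖p.1‖ + δ := by
    have hinner : |⟪p.1, x⟫| ≤ R * ‖p.1‖ :=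
      (abs_real_inner_le_norm _ _).trans (by
        rw [mul_comm]; gcongr; exact mem_closedBall_zero_iff.1 hx)
    rw [Prod.norm_def, max_le_iff, Real.norm_eq_abs]
    refine ⟨?_, ?_⟩
    · nlinarith [norm_nonneg p.1]
    · calc |p.2| = |affineForm p x - ⟪p.1, x⟫| := by rw [affineForm, add_sub_cancel_left]
        _ ≤ |affineForm p x| + |⟪p.1, x⟫| := abs_sub _ _
        _ ≤ R * ‖p.1‖ + δ := by linarith
  have hsub : slab p R δ ⊆ closedBall 0 (R + 1) :=
    (sep_subset _ _).trans (closedBall_subset_closedBall (by linarith))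
  calc μ (slab p R δ) * ‖p‖ₑ
      ≤ μ (slab p R δ) * (ENNReal.ofReal R * ‖p.1‖ₑ + ENNReal.ofReal δ) := by
        gcongr
        rw [← ofReal_norm, ← ofReal_norm, ← ENNReal.ofReal_mul (by positivity),
          ← ENNReal.ofReal_add (by positivity) hδ.le]
        exact ENNReal.ofReal_le_ofReal hnorm
    _ = ENNReal.ofReal R * (μ (slab p R δ) * ‖p.1‖ₑ) + μ (slab p R δ) * ENNReal.ofReal δ := by
      ring
    _ ≤ ENNReal.ofReal R * (μ (closedBall 0 (R + 1)) * (2 * ENNReal.ofReal δ)) +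
        μ (closedBall 0 (R + 1)) * ENNReal.ofReal δ := by
      gcongr ENNReal.ofReal R * ?_ + ?_ * ENNReal.ofReal δ
      · exact measure_slab_mul_enorm_fst_le μ p R hδ
      · exact measure_mono hsub
    _ = μ (closedBall 0 (R + 1)) * (2 * ENNReal.ofReal R + 1) * ENNReal.ofReal δ := by ring

theorem measurable_graphMap (p : V × ℝ) : Measurable (graphMap p) :=
  measurable_id.prodMk (measurable_affineForm p)

theorem measure_graphBand_inter_le (μ : Measure V) [SFinite μ] (p q : V × ℝ) (R δ : ℝ) :
    (μ.prod volume) (graphBand p R δ ∩ graphBand q R δ) ≤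
      ENNReal.ofReal (2 * δ) * μ (slab (p - q) R (2 * δ)) :=
  (measure_mono (graphBand_inter_subset p q R δ)).trans_eq
    (prod_volume_regionBetween_sub_add μ (measurable_affineForm p) (measurableSet_slab _ _ _) δ)

theorem mul_measure_preimage_graphMap_le (μ : Measure V) [SFinite μ] (p : V × ℝ)
    {D : Set (V × ℝ)} (hD : MeasurableSet D) {R : ℝ} (hDR : D ⊆ closedBall 0 R) (δ : ℝ) :
    ENNReal.ofReal (2 * δ) * μ (graphMap p ⁻¹' D) ≤
      (μ.prod volume) (graphBand p R δ ∩ cthickening δ D) := by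
  rw [← prod_volume_regionBetween_sub_add μ (measurable_affineForm p)
    (measurable_graphMap p hD)]
  refine measure_mono ?_
  rintro ⟨x, y⟩ ⟨hx, hlt, hgt⟩
  have hxR : ‖x‖ ≤ R := (norm_fst_le _).trans (mem_closedBall_zero_iff.1 (hDR hx))
  exact ⟨⟨mem_closedBall_zero_iff.2 hxR, hlt, hgt⟩,
    mem_cthickening_of_graphMap_mem (abs_le.2 ⟨by linarith, by linarith⟩) hx⟩

variable [FiniteDimensional ℝ V]

theorem measurableSet_setOf_mem_graphBand (R δ : ℝ) :
    MeasurableSet {w : (V × ℝ) × (V × ℝ) | w.2 ∈ graphBand w.1 R δ} := by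
  have hform : Measurable fun w : (V × ℝ) × (V × ℝ) => affineForm w.1 w.2.1 :=
    (continuous_affineForm.comp (by fun_prop : Continuous fun w : (V × ℝ) × (V × ℝ) =>
      (w.1, w.2.1))).measurable
  exact (measurableSet_closedBall.preimage measurable_snd.fst).inter
    ((measurableSet_lt (hform.sub_const δ) measurable_snd.snd).inter
      (measurableSet_lt measurable_snd.snd (hform.add_const δ)))

variable (μ : Measure V) [μ.IsAddHaarMeasure]

theorem lintegral_measure_graphBand_inter_le {ν : Measure (V × ℝ)} {q : V × ℝ} {θ : ℝ≥0∞} {m : ℕ}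
    (hν : ∀ i ≤ m, ν (closedBall q (2⁻¹ ^ i)) ≤ θ ^ i) (hdist : ∀ᵐ p ∂ν, dist p q ≤ 1)
    {R : ℝ} (hR : 1 ≤ R) :
    ∫⁻ p, (μ.prod volume) (graphBand p R (2⁻¹ ^ m) ∩ graphBand q R (2⁻¹ ^ m)) ∂ν ≤
      ENNReal.ofReal (2 * 2⁻¹ ^ m) * (2⁻¹ ^ m *
        (μ (closedBall 0 (R + 1)) * (2 * ENNReal.ofReal R + 1) * 4 * (1 - 2 * θ)⁻¹)) := by
  set M : ℝ≥0∞ := μ (closedBall 0 (R + 1)) * (2 * ENNReal.ofReal R + 1) * 2 with hM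
  have hslab_le (p : V × ℝ) : μ (slab (p - q) R (2 * 2⁻¹ ^ m)) ≤ M :=
    calc μ (slab (p - q) R (2 * 2⁻¹ ^ m)) ≤ μ (closedBall 0 (R + 1)) :=
          measure_mono ((sep_subset _ _).trans (closedBall_subset_closedBall (by linarith)))
      _ ≤ M := by
          rw [hM, mul_assoc]
          exact le_mul_of_one_le_right' (one_le_mul le_add_self one_le_two)
  have hslab_edist (p : V × ℝ) :
      μ (slab (p - q) R (2 * 2⁻¹ ^ m)) * edist p q ≤ M * 2⁻¹ ^ m := by
    rw [edist_eq_enorm_sub]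
    refine (measure_slab_mul_enorm_le μ (p - q) hR (by positivity)).trans_eq ?_
    rw [ENNReal.ofReal_mul zero_le_two, ENNReal.ofReal_pow (by positivity),
      ENNReal.ofReal_inv_of_pos two_pos, ENNReal.ofReal_ofNat, hM, mul_assoc, mul_assoc, mul_assoc]
  calc ∫⁻ p, (μ.prod volume) (graphBand p R (2⁻¹ ^ m) ∩ graphBand q R (2⁻¹ ^ m)) ∂ν
      ≤ ∫⁻ p, ENNReal.ofReal (2 * 2⁻¹ ^ m) * μ (slab (p - q) R (2 * 2⁻¹ ^ m)) ∂ν :=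
        lintegral_mono fun p => measure_graphBand_inter_le μ p q R _
    _ = ENNReal.ofReal (2 * 2⁻¹ ^ m) * ∫⁻ p, μ (slab (p - q) R (2 * 2⁻¹ ^ m)) ∂ν :=
        lintegral_const_mul' _ _ ENNReal.ofReal_ne_top
    _ ≤ ENNReal.ofReal (2 * 2⁻¹ ^ m) * (M * 2⁻¹ ^ m * (2 * (1 - 2 * θ)⁻¹)) := by
        gcongr
        exact lintegral_le_of_measure_closedBall_le hν hdist hslab_le hslab_edist
    _ = _ := by rw [hM]; ring

theorem measure_univ_mul_sq_le {ν : Measure (V × ℝ)} [IsFiniteMeasure ν] {θ τ : ℝ≥0∞} {m : ℕ}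
    (hν : ∀ᵐ q ∂ν, ∀ i ≤ m, ν (closedBall q (2⁻¹ ^ i)) ≤ θ ^ i)
    (hdist : ∀ᵐ q ∂ν, ∀ᵐ p ∂ν, dist p q ≤ 1) {D : Set (V × ℝ)} (hD : MeasurableSet D) {R : ℝ}
    (hR : 1 ≤ R) (hDR : D ⊆ closedBall 0 R) (hτ : ∀ᵐ p ∂ν, τ ≤ μ (graphMap p ⁻¹' D)) :
    ν univ * τ ^ 2 ≤ μ (closedBall 0 (R + 1)) * (2 * ENNReal.ofReal R + 1) * 4 * (1 - 2 * θ)⁻¹ *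
      (μ.prod volume) (cthickening (2⁻¹ ^ m) D) := by
  rcases eq_or_ne ν 0 with rfl | hν0
  · simp
  set K : ℝ≥0∞ := μ (closedBall 0 (R + 1)) * (2 * ENNReal.ofReal R + 1) * 4 * (1 - 2 * θ)⁻¹
  set W : ℝ≥0∞ := (μ.prod volume) (cthickening (2⁻¹ ^ m) D)
  set e : ℝ≥0∞ := ENNReal.ofReal (2 * 2⁻¹ ^ m) with he
  have he0 : e ≠ 0 := by rw [he]; positivity
  have hηe : (2⁻¹ : ℝ≥0∞) ^ m ≤ e := by
    rw [he, ENNReal.ofReal_mul zero_le_two, ENNReal.ofReal_pow (by positivity),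
      ENNReal.ofReal_inv_of_pos two_pos, ENNReal.ofReal_ofNat]
    exact le_mul_of_one_le_left' one_le_two
  have hlower : e * τ * ν univ ≤
      ∫⁻ p, (μ.prod volume) (graphBand p R (2⁻¹ ^ m) ∩ cthickening (2⁻¹ ^ m) D) ∂ν := by
    rw [← lintegral_const]
    exact lintegral_mono_ae (hτ.mono fun p hp =>
      (mul_le_mul_right hp e).trans (mul_measure_preimage_graphMap_le μ p hD hDR _))
  have henergy : ∫⁻ q, ∫⁻ p, (μ.prod volume)
      (graphBand p R (2⁻¹ ^ m) ∩ graphBand q R (2⁻¹ ^ m)) ∂ν ∂ν ≤ e * (e * K) * ν univ := by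
    rw [← lintegral_const]
    refine lintegral_mono_ae ((hν.and hdist).mono fun q hq => ?_)
    exact (lintegral_measure_graphBand_inter_le μ hq.1 hq.2 hR).trans (by gcongr)
  have hsq : (e * τ * ν univ) ^ 2 ≤ W * (e * (e * K) * ν univ) :=
    calc (e * τ * ν univ) ^ 2
        ≤ (∫⁻ p, (μ.prod volume) (graphBand p R (2⁻¹ ^ m) ∩ cthickening (2⁻¹ ^ m) D) ∂ν) ^ 2 := by
          gcongr
      _ ≤ W * ∫⁻ q, ∫⁻ p, (μ.prod volume)
            (graphBand p R (2⁻¹ ^ m) ∩ graphBand q R (2⁻¹ ^ m)) ∂ν ∂ν :=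
          sq_lintegral_measure_inter_le ν _ _ (measurableSet_setOf_mem_graphBand R _)
      _ ≤ W * (e * (e * K) * ν univ) := by gcongr
  refine (ENNReal.mul_le_mul_iff_right (a := e ^ 2 * ν univ) ?_ ?_).1 ?_
  · exact mul_ne_zero (pow_ne_zero 2 he0) (Measure.measure_univ_ne_zero.2 hν0)
  · exact ENNReal.mul_ne_top (by finiteness) (measure_ne_top ν univ)
  · calc e ^ 2 * ν univ * (ν univ * τ ^ 2) = (e * τ * ν univ) ^ 2 := by ring
      _ ≤ W * (e * (e * K) * ν univ) := hsq
      _ = e ^ 2 * ν univ * (K * W) := by ring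

theorem exists_hausdorffContent_mul_sq_le {s : ℝ} (hs : 1 < s) {R : ℝ} (hR : 1 ≤ R) :
    ∃ C ≠ ∞, ∀ ⦃S : Set (V × ℝ)⦄ ⦃p₀ : V × ℝ⦄ ⦃D : Set (V × ℝ)⦄ ⦃δ : ℝ⦄ ⦃τ : ℝ≥0∞⦄,
      S ⊆ closedBall p₀ 2⁻¹ → MeasurableSet D → D ⊆ closedBall 0 R → 0 < δ →
      (∀ p ∈ S, τ ≤ μ (graphMap p ⁻¹' D)) →
      hausdorffContent s S * τ ^ 2 ≤ C * (μ.prod volume) (cthickening δ D) := by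
  have hs0 : 0 ≤ s := zero_le_one.trans hs.le
  set θ : ℝ≥0∞ := 2⁻¹ ^ s with hθ
  have h2θ : 2 * θ < 1 :=
    calc 2 * θ < 2 * 2⁻¹ ^ (1 : ℝ) := by
          gcongr
          · exact ENNReal.ofNat_ne_top
          exact ENNReal.rpow_lt_rpow_of_exponent_gt (by simp) (by simp) hs
      _ = 1 := by rw [ENNReal.rpow_one, ENNReal.mul_inv_cancel two_ne_zero ENNReal.ofNat_ne_top]
  set K : ℝ≥0∞ := μ (closedBall 0 (R + 1)) * (2 * ENNReal.ofReal R + 1) * 4 * (1 - 2 * θ)⁻¹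
  have hK : K ≠ ∞ := by
    have hball : μ (closedBall 0 (R + 1)) ≠ ∞ := measure_closedBall_lt_top.ne
    have hinv : (1 - 2 * θ)⁻¹ ≠ ∞ := ENNReal.inv_ne_top.2 (tsub_pos_of_lt h2θ).ne'
    finiteness
  refine ⟨20 ^ s * K, by finiteness, fun S p₀ D δ τ hS hD hDR hδ hτ => ?_⟩
  obtain ⟨m, hm⟩ := exists_pow_lt_of_lt_one hδ (by norm_num : (2⁻¹ : ℝ) < 1)
  obtain ⟨ν, hνfin, hν, hcontent⟩ :=
    exists_frostman_measure hs0 ((isCompact_closedBall p₀ 2⁻¹).totallyBounded.subset hS) m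
  have hdist (p q : V × ℝ) (hp : p ∈ S) (hq : q ∈ S) : dist p q ≤ 1 :=
    (dist_triangle_right p q p₀).trans (by
      linarith [mem_closedBall.1 (hS hp), mem_closedBall.1 (hS hq)])
  have hνθ : ∀ᵐ q ∂ν, ∀ i ≤ m, ν (closedBall q (2⁻¹ ^ i)) ≤ θ ^ i := hν.mono fun q hq i hi =>
    (hq.2 i hi).trans_eq (by
      rw [hθ, ← ENNReal.rpow_natCast_mul, mul_comm, ENNReal.rpow_mul_natCast])
  calc hausdorffContent s S * τ ^ 2
      ≤ 20 ^ s * ν univ * τ ^ 2 := by gcongr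
    _ = 20 ^ s * (ν univ * τ ^ 2) := mul_assoc _ _ _
    _ ≤ 20 ^ s * (K * (μ.prod volume) (cthickening (2⁻¹ ^ m) D)) := by
        gcongr 20 ^ s * ?_
        exact measure_univ_mul_sq_le μ hνθ
          (hν.mono fun q hq => hν.mono fun p hp => hdist p q hp.1 hq.1) hD hR hDR
          (hν.mono fun p hp => hτ p hp.1)
    _ ≤ 20 ^ s * K * (μ.prod volume) (cthickening δ D) := by
        rw [← mul_assoc]
        gcongr 20 ^ s * K * (μ.prod volume) ?_
        exact cthickening_mono hm.le D

theorem hausdorffContent_eq_zero_of_le_measure_preimage_graphMap {s : ℝ} (hs : 1 < s) {R : ℝ}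
    (hR : 1 ≤ R) {N : Set (V × ℝ)} (hNR : N ⊆ closedBall 0 R) (hN : (μ.prod volume) N = 0)
    {S : Set (V × ℝ)} {p₀ : V × ℝ} (hS : S ⊆ closedBall p₀ 2⁻¹) {t : ℝ≥0∞} (ht : t ≠ 0)
    (hSt : ∀ p ∈ S, t ≤ μ (graphMap p ⁻¹' N)) : hausdorffContent s S = 0 := by
  obtain ⟨C, hC, hcontent⟩ := exists_hausdorffContent_mul_sq_le μ hs hR
  refine nonpos_iff_eq_zero.1 (le_of_forall_gt_imp_ge_of_dense fun ε hε => ?_)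
  obtain ⟨a, ha0, hat⟩ := ENNReal.exists_pos_sum_of_countable' ht ℕ
  obtain ⟨b, hb0, hbε⟩ := ENNReal.exists_pos_sum_of_countable'
    (ENNReal.div_pos hε.ne' hC).ne' ℕ
  obtain ⟨D, δ, hND, hD⟩ := exists_isCompact_cover_measure_cthickening_lt
    (isCompact_closedBall 0 R) hNR hN (ε := fun j => b j * a j ^ 2)
    fun j => mul_ne_zero (hb0 j).ne' (pow_ne_zero 2 (ha0 j).ne')
  let T : ℕ → Set (V × ℝ) := fun j => {p ∈ S | a j ≤ μ (graphMap p ⁻¹' D j)}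
  have hST : S ⊆ ⋃ j, T j := fun p hp => by
    by_contra hpT
    simp only [T, mem_iUnion, mem_ofPred_eq, hp, true_and, not_exists, not_le] at hpT
    refine (hSt p hp).not_gt ?_
    calc μ (graphMap p ⁻¹' N) ≤ μ (⋃ j, graphMap p ⁻¹' D j) := by
          rw [← preimage_iUnion]
          exact measure_mono (preimage_mono hND)
      _ ≤ ∑' j, μ (graphMap p ⁻¹' D j) := measure_iUnion_le _
      _ ≤ ∑' j, a j := ENNReal.tsum_le_tsum fun j => (hpT j).le
      _ < t := hat
  have hT (j : ℕ) : hausdorffContent s (T j) ≤ C * b j := by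
    obtain ⟨hDc, hDR, hδ, hDlt⟩ := hD j
    have ha_top : a j ≠ ∞ := ((ENNReal.le_tsum j).trans_lt (hat.trans_le le_top)).ne
    have hTj := hcontent (S := T j) ((sep_subset S _).trans hS) hDc.measurableSet hDR hδ
      fun p hp => hp.2
    refine (ENNReal.mul_le_mul_iff_left (pow_ne_zero 2 (ha0 j).ne')
      (ENNReal.pow_ne_top ha_top)).1 (hTj.trans ?_)
    rw [mul_assoc]
    gcongr
  calc hausdorffContent s S
      ≤ ∑' j, hausdorffContent s (T j) := (measure_mono hST).trans (measure_iUnion_le _)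
    _ ≤ ∑' j, C * b j := ENNReal.tsum_le_tsum hT
    _ = C * ∑' j, b j := ENNReal.tsum_mul_left
    _ ≤ C * (ε / C) := by gcongr
    _ ≤ ε := ENNReal.mul_div_le

theorem hausdorffMeasure_setOf_le_measure_preimage_graphMap_eq_zero {s : ℝ} (hs : 1 < s) {R : ℝ}
    (hR : 1 ≤ R) {N : Set (V × ℝ)} (hNR : N ⊆ closedBall 0 R) (hN : (μ.prod volume) N = 0)
    {t : ℝ≥0∞} (ht : t ≠ 0) : μH[s] {p | t ≤ μ (graphMap p ⁻¹' N)} = 0 :=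
  measure_null_of_locally_null _ fun p₀ _ =>
    ⟨{p | t ≤ μ (graphMap p ⁻¹' N)} ∩ closedBall p₀ 2⁻¹,
      inter_mem_nhdsWithin _ (closedBall_mem_nhds p₀ (by norm_num)),
      hausdorffMeasure_eq_zero_of_hausdorffContent_eq_zero (zero_lt_one.trans hs) <|
        hausdorffContent_eq_zero_of_le_measure_preimage_graphMap μ hs hR hNR hN inter_subset_right
          ht fun _ hp => hp.1⟩

theorem dimH_setOf_measure_preimage_graphMap_ne_zero_le_one {N : Set (V × ℝ)}
    (hN : (μ.prod volume) N = 0) : dimH {p | μ (graphMap p ⁻¹' N) ≠ 0} ≤ 1 := by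
  refine le_of_not_gt fun hdim => ?_
  obtain ⟨s, hs1, hs⟩ := ENNReal.lt_iff_exists_nnreal_btwn.1 hdim
  let F : ℕ → ℕ → Set (V × ℝ) := fun k l =>
    {p | (l : ℝ≥0∞)⁻¹ ≤ μ (graphMap p ⁻¹' (N ∩ closedBall 0 k))}
  have hcov : {p | μ (graphMap p ⁻¹' N) ≠ 0} ⊆ ⋃ k, ⋃ l, F k l := fun p hp => by
    obtain ⟨k, hk⟩ : ∃ k : ℕ, μ (graphMap p ⁻¹' (N ∩ closedBall 0 k)) ≠ 0 := by
      by_contra! hnull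
      refine hp ?_
      rw [← inter_univ N, ← iUnion_closedBall_nat (0 : V × ℝ), inter_iUnion, preimage_iUnion]
      exact measure_iUnion_null hnull
    obtain ⟨l, hl⟩ := ENNReal.exists_inv_nat_lt hk
    exact mem_iUnion₂.2 ⟨k, l, hl.le⟩
  have hnull : μH[(s : ℝ)] {p | μ (graphMap p ⁻¹' N) ≠ 0} = 0 :=
    measure_mono_null hcov <| measure_iUnion_null fun k => measure_iUnion_null fun l =>
      hausdorffMeasure_setOf_le_measure_preimage_graphMap_eq_zero μ (by exact_mod_cast hs1)
        (le_add_of_nonneg_left k.cast_nonneg)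
        (inter_subset_right.trans (closedBall_subset_closedBall (lt_add_one _).le))
        (measure_mono_null inter_subset_left hN) (by simp)
  exact ENNReal.zero_ne_top (hnull.symm.trans (hausdorffMeasure_of_lt_dimH hs))

theorem measure_preimage_graphMap_ne_zero_of_hausdorffMeasure_pos {p : V × ℝ} {A : Set (V × ℝ)}
    (hA : 0 < μH[Module.finrank ℝ V] (affineGraph p ∩ A)) : μ (graphMap p ⁻¹' A) ≠ 0 := by
  intro hnull
  have himage : affineGraph p ∩ A ⊆ graphMap p '' (graphMap p ⁻¹' A) := by
    rintro ⟨x, y⟩ ⟨hy : y = affineForm p x, hA⟩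
    exact ⟨x, by rwa [mem_preimage, graphMap, ← hy], by rw [graphMap, hy]⟩
  have hhausdorff : μH[Module.finrank ℝ V] (graphMap p ⁻¹' A) = 0 :=
    Measure.absolutelyContinuous_isAddHaarMeasure μH[Module.finrank ℝ V] μ hnull
  refine hA.not_ge ((measure_mono himage).trans ?_)
  refine ((lipschitzWith_graphMap p).hausdorffMeasure_image_le (by positivity) _).trans_eq ?_
  rw [hhausdorff, mul_zero]

theorem volume_pos_hyperplaneUnion_inter_general {E A : Set (V × ℝ)} (hdim : 1 < dimH E)
    (hpos : ∀ p ∈ E, 0 < μH[Module.finrank ℝ V] (affineGraph p ∩ A)) :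
    0 < (μ.prod volume) ((⋃ p ∈ E, affineGraph p) ∩ A) := by
  refine pos_iff_ne_zero.2 fun hnull => hdim.not_ge ?_
  refine (dimH_mono fun p hp => ?_).trans
    (dimH_setOf_measure_preimage_graphMap_ne_zero_le_one μ hnull)
  have hslice : graphMap p ⁻¹' A ⊆ graphMap p ⁻¹' ((⋃ p ∈ E, affineGraph p) ∩ A) :=
    fun x hx => ⟨mem_biUnion hp rfl, hx⟩
  exact fun h => measure_preimage_graphMap_ne_zero_of_hausdorffMeasure_pos μ (hpos p hp)
    (measure_mono_null hslice h)

end Hyperplanes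

/-- **Positive measure for unions of pieces of hyperplanes.** Let `E ⊆ ℝⁿ` be a non-empty
Borel set with `dim_H E > 1` and `A ⊆ ℝⁿ` a Borel set intersecting each hyperplane `L(p)`,
`p ∈ E`, in a set of positive `(n−1)`-dimensional measure. Then `𝓛ⁿ(L(E) ∩ A) > 0`. -/
theorem volume_pos_hyperplaneUnion_inter (n : ℕ) (hn : 2 ≤ n)
    (E : Set (EuclideanSpace ℝ (Fin (n - 1)) × ℝ)) (hE : MeasurableSet E)
    (hEne : E.Nonempty) (hdim : 1 < dimH E)
    (A : Set (EuclideanSpace ℝ (Fin (n - 1)) × ℝ)) (hA : MeasurableSet A)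
    (hpos : ∀ p ∈ E, 0 < μH[(n : ℝ) - 1] (hyperplane p ∩ A)) :
    0 < volume (hyperplaneUnion E ∩ A) := by
  refine volume_pos_hyperplaneUnion_inter_general volume hdim fun p hp => ?_
  simpa [Nat.cast_sub (one_le_two.trans hn)] using! hpos p hp
end

section
/- Let n ≥ 2 and let E ⊂ ℝⁿ = ℝ^{n−1} × ℝ be an 𝓗ˢ-measurable set with 0 < 𝓗ˢ(E) < ∞, where s = dim_H E > 0. Then there exists a set X ⊂ ℝ^{n−1} with 𝓛^{n−1}(X) = 0 such that for every u ∈ ℝ^{n−1} \ X and every 𝓗ˢ-measurable set F ⊂ E with 𝓗ˢ(F) > 0, the set π_u(F) ⊂ ℝ has Hausdorff dimension equal to min{s, 1}. -/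
open MeasureTheory RealInnerProductSpace

/-- The dual projection `π_u : ℝⁿ = ℝ^{n−1} × ℝ → ℝ`, `π_u(a,b) = a·u + b`. -/
noncomputable def dualProj {n : ℕ} (u : EuclideanSpace ℝ (Fin (n - 1)))
    (p : EuclideanSpace ℝ (Fin (n - 1)) × ℝ) : ℝ :=
  ⟪p.1, u⟫ + p.2

/-!
Let `μ` be the restriction of `𝓗ˢ` to `E`, and let `0 < t < min s 1`. By the upper density bound
for Hausdorff measures, `μ (closedBall x r) = O(r ^ s)` as `r → 0` for `μ`-a.e. `x`, so the Riesz
`t`-potential of `μ` is finite at `μ`-a.e. point. For `p ≠ 0` the set of `u` in a ball with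
`|π_u p| ≤ r` has measure `O(r / ‖p‖)`, and as `t < 1` the integral of `|π_u x - π_u y|⁻ᵗ` over `u`
in a ball is `O(‖x - y‖⁻ᵗ)`. By Tonelli, for a.e. `u` the `t`-potential of the push-forward of `μ`
under `π_u` is finite at `π_u x` for `μ`-a.e. `x`. This property of `u` involves no subset of `E`,
which is why one null set serves every `F`: when `μ F > 0`, the potential is bounded on the image
of a part of `F` of positive measure, and the mass distribution principle gives
`t ≤ dimH (π_u F)`.
-/

section

open Set Filter Metric Topology
open scoped ENNReal NNReal

section RieszPotential

/-- The Riesz `t`-potential `∫ d(x, y)⁻ᵗ dμ(y)` of a measure `μ` at the point `x`. It is valued in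
`ℝ≥0∞`, so for `0 < t` an atom of `μ` at `x` makes it infinite. -/
noncomputable def rieszPotential {X : Type*} [PseudoEMetricSpace X] [MeasurableSpace X]
    (t : ℝ) (μ : Measure X) (x : X) : ℝ≥0∞ :=
  ∫⁻ y, edist x y ^ (-t) ∂μ

section PseudoEMetricSpace

variable {X : Type*} [PseudoEMetricSpace X] [MeasurableSpace X] [OpensMeasurableSpace X]

theorem measure_div_ediam_rpow_le_rieszPotential {t : ℝ} (ht : 0 ≤ t) (μ : Measure X) {A : Set X}
    {x : X} (hx : x ∈ A) : μ A / ediam A ^ t ≤ rieszPotential t μ x := by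
  have hsub : A ⊆ {y | ediam A ^ (-t) ≤ edist x y ^ (-t)} := fun y hy ↦ by
    simp only [mem_ofPred_eq, ENNReal.rpow_neg, ENNReal.inv_le_inv]
    gcongr
    exact edist_le_ediam_of_mem hx hy
  calc μ A / ediam A ^ t
      = ediam A ^ (-t) * μ A := by rw [ENNReal.rpow_neg, div_eq_mul_inv, mul_comm]
    _ ≤ ediam A ^ (-t) * μ {y | ediam A ^ (-t) ≤ edist x y ^ (-t)} := by gcongr
    _ ≤ rieszPotential t μ x := mul_meas_ge_le_lintegral (by fun_prop) _

theorem rieszPotential_map {Z : Type*} [MeasurableSpace Z] (t : ℝ) (μ : Measure Z) {f : Z → X}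
    (hf : Measurable f) (x : X) :
    rieszPotential t (μ.map f) x = ∫⁻ z, edist x (f z) ^ (-t) ∂μ :=
  lintegral_map (by fun_prop) hf

theorem measurable_rieszPotential [SecondCountableTopology X] (t : ℝ) (μ : Measure X) [SFinite μ] :
    Measurable (rieszPotential t μ) :=
  (measurable_edist.pow_const (-t)).lintegral_prod_right'

end PseudoEMetricSpace

section Dimension

variable {X : Type*} [EMetricSpace X] [MeasurableSpace X] [BorelSpace X] {μ : Measure X} {A : Set X}

theorem measure_le_mul_hausdorffMeasure {t : ℝ} (ht : 0 ≤ t) {c : ℝ≥0∞} (hc : c ≠ ∞)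
    (hμ : ∀ B ⊆ A, μ B ≤ c * ediam B ^ t) : μ A ≤ c * μH[t] A := by
  obtain rfl | hc₀ := eq_or_ne c 0
  · simpa using hμ A Subset.rfl
  have hle : c⁻¹ • μ.restrict A ≤ μH[t] := by
    refine Measure.le_hausdorffMeasure t _ 1 one_pos fun B _ ↦ ?_
    rw [Measure.smul_apply, smul_eq_mul, ENNReal.inv_mul_le_iff hc₀ hc]
    calc μ.restrict A B ≤ μ.restrict A (closure B) := measure_mono subset_closure
      _ = μ (closure B ∩ A) := Measure.restrict_apply isClosed_closure.measurableSet
      _ ≤ c * ediam (closure B ∩ A) ^ t := hμ _ inter_subset_right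
      _ ≤ c * ediam B ^ t := by
        rw [← ediam_closure B]
        gcongr
        exact inter_subset_left
  simpa [ENNReal.inv_mul_le_iff hc₀ hc] using hle A

theorem le_dimH_of_rieszPotential_le {t : ℝ≥0} {c : ℝ≥0∞} (hc : c ≠ ∞) (hA : μ A ≠ 0)
    (hμ : ∀ x ∈ A, rieszPotential t μ x ≤ c) : t ≤ dimH A := by
  refine le_dimH_of_hausdorffMeasure_ne_zero fun hzero ↦ hA ?_
  have hgrowth : ∀ B ⊆ A, μ B ≤ (c + 1) * ediam B ^ (t : ℝ) := by
    intro B hBA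
    obtain rfl | ⟨x, hx⟩ := B.eq_empty_or_nonempty
    · simp
    rw [← ENNReal.div_le_iff_le_mul (.inr (by finiteness)) (.inr (by simp))]
    exact (measure_div_ediam_rpow_le_rieszPotential t.2 μ hx).trans
      ((hμ x (hBA hx)).trans le_self_add)
  simpa [hzero] using measure_le_mul_hausdorffMeasure t.2 (by finiteness) hgrowth

theorem le_dimH_of_ae_rieszPotential_ne_top {t : ℝ≥0} (hA : μ A ≠ 0)
    (hμ : ∀ᵐ x ∂μ, rieszPotential t μ x ≠ ∞) : t ≤ dimH A := by
  have hcover : A ≤ᵐ[μ] ⋃ M : ℕ, {x ∈ A | rieszPotential t μ x ≤ M} := by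
    filter_upwards [hμ] with x hx hxA
    obtain ⟨M, hM⟩ := ENNReal.exists_nat_gt hx
    exact mem_iUnion.2 ⟨M, hxA, hM.le⟩
  obtain ⟨M, hM⟩ : ∃ M : ℕ, μ {x ∈ A | rieszPotential t μ x ≤ M} ≠ 0 := by
    by_contra! hnull
    exact hA (measure_mono_null_ae hcover (measure_iUnion_null hnull))
  calc (t : ℝ≥0∞) ≤ dimH {x ∈ A | rieszPotential t μ x ≤ M} :=
        le_dimH_of_rieszPotential_le (ENNReal.natCast_ne_top M) hM fun _ hx ↦ hx.2
    _ ≤ dimH A := dimH_mono (sep_subset _ _)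

theorem le_dimH_image_of_ae_rieszPotential_map_ne_top {Z : Type*} [MeasurableSpace Z]
    [SecondCountableTopology X] {ν : Measure Z} [SFinite ν] {f : Z → X} (hf : Measurable f)
    {t : ℝ≥0} {F : Set Z} (hF : ν F ≠ 0)
    (hν : ∀ᵐ z ∂ν, rieszPotential t (ν.map f) (f z) ≠ ∞) : t ≤ dimH (f '' F) := by
  have hfinite : MeasurableSet {x | rieszPotential t (ν.map f) x ≠ ∞} :=
    (measurableSet_singleton ∞).compl.preimage (measurable_rieszPotential _ _)
  refine le_dimH_of_ae_rieszPotential_ne_top (μ := ν.map f) (fun hzero ↦ hF ?_)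
    ((ae_map_iff hf.aemeasurable hfinite).2 hν)
  exact measure_mono_null (subset_preimage_image f F)
    (Measure.preimage_null_of_map_null hf.aemeasurable hzero)

end Dimension

section Growth

variable {X : Type*} [PseudoMetricSpace X] [MeasurableSpace X] {μ : Measure X}
  {x : X} {s t δ : ℝ} {C : ℝ≥0∞}

theorem ae_dist_ne_zero_of_measure_closedBall_le (hs : 0 < s) (hC : C ≠ ∞)
    (hμ : ∀ᶠ r in 𝓝[>] 0, μ (closedBall x r) ≤ C * ENNReal.ofReal (r ^ s)) :
    ∀ᵐ y ∂μ, dist x y ≠ 0 := by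
  have hlim : Tendsto (fun r : ℝ ↦ C * ENNReal.ofReal (r ^ s)) (𝓝[>] 0) (𝓝 0) := by
    have hcont : ContinuousAt (fun r : ℝ ↦ C * ENNReal.ofReal (r ^ s)) 0 :=
      ENNReal.Tendsto.const_mul (ENNReal.continuous_ofReal.continuousAt.comp
        (Real.continuousAt_rpow_const 0 s (.inr hs.le))) (.inr hC)
    simpa [ContinuousAt, hs.ne'] using hcont.tendsto.mono_left nhdsWithin_le_nhds
  refine ae_iff.2 (le_antisymm (ge_of_tendsto hlim ?_) zero_le)
  filter_upwards [hμ, self_mem_nhdsWithin] with r hr hr₀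
  refine (measure_mono fun y hy ↦ mem_closedBall'.2 ?_).trans hr
  exact (not_not.1 hy).trans_le (le_of_lt hr₀)

theorem measure_le_dist_rpow_neg_le (ht : 0 < t) (hx : ∀ᵐ y ∂μ, dist x y ≠ 0) {l : ℝ}
    (hl : 0 < l) : μ {y | l ≤ dist x y ^ (-t)} ≤ μ (closedBall x (l ^ (-t)⁻¹)) := by
  refine measure_mono_ae ?_
  filter_upwards [hx] with y hxy hy
  exact mem_closedBall'.2
    ((Real.le_rpow_inv_iff_of_neg (by positivity) hl (neg_neg_of_pos ht)).2 hy)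

theorem lintegral_Ioi_rpow_of_lt {p a : ℝ} (hp : p < -1) (ha : 0 < a) :
    ∫⁻ r in Ioi a, ENNReal.ofReal (r ^ p) = ENNReal.ofReal (-a ^ (p + 1) / (p + 1)) := by
  rw [← integral_Ioi_rpow_of_lt hp ha, ofReal_integral_eq_lintegral_ofReal
    (integrableOn_Ioi_rpow_of_lt hp ha)]
  filter_upwards [ae_restrict_mem measurableSet_Ioi] with r hr
  exact Real.rpow_nonneg (ha.trans hr).le p

-- Layer-cake formula, with the level sets `{y | l ≤ d(x, y)⁻ᵗ}` split at `l = δ⁻ᵗ`.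
theorem rieszPotential_le_of_measure_closedBall_le [OpensMeasurableSpace X] (ht : 0 < t)
    (hts : t < s) (hδ : 0 < δ) (hC : C ≠ ∞)
    (hμ : ∀ r ∈ Ioc 0 δ, μ (closedBall x r) ≤ C * ENNReal.ofReal (r ^ s)) :
    rieszPotential t μ x ≤ ENNReal.ofReal (δ ^ (-t)) * μ univ +
      C * ENNReal.ofReal (t / (s - t) * δ ^ (s - t)) := by
  have hnull : ∀ᵐ y ∂μ, dist x y ≠ 0 := ae_dist_ne_zero_of_measure_closedBall_le
    (ht.trans hts) hC (eventually_of_mem (Ioc_mem_nhdsGT hδ) hμ)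
  have hlevel : ∀ l ∈ Ioi (δ ^ (-t)),
      μ {y | l ≤ dist x y ^ (-t)} ≤ C * ENNReal.ofReal (l ^ (-s / t)) := by
    intro l hl
    have hl₀ : 0 < l := (Real.rpow_pos_of_pos hδ _).trans hl
    have hr : l ^ (-t)⁻¹ ∈ Ioc 0 δ :=
      ⟨by positivity, (Real.rpow_inv_le_iff_of_neg hl₀ hδ (neg_neg_of_pos ht)).2 (le_of_lt hl)⟩
    refine ((measure_le_dist_rpow_neg_le ht hnull hl₀).trans (hμ _ hr)).trans_eq ?_
    rw [← Real.rpow_mul hl₀.le]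
    congr 3
    field_simp
  have htail : ∫⁻ l in Ioi (δ ^ (-t)), ENNReal.ofReal (l ^ (-s / t)) =
      ENNReal.ofReal (t / (s - t) * δ ^ (s - t)) := by
    have hst : s - t ≠ 0 := (sub_pos.2 hts).ne'
    rw [lintegral_Ioi_rpow_of_lt (by rw [div_lt_iff₀ ht]; linarith) (by positivity),
      ← Real.rpow_mul hδ.le, show -t * (-s / t + 1) = s - t by field_simp; ring,
      show -s / t + 1 = -((s - t) / t) by field_simp; ring]
    congr 1
    field_simp
  calc rieszPotential t μ x = ∫⁻ y, ENNReal.ofReal (dist x y ^ (-t)) ∂μ := by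
        refine lintegral_congr_ae ?_
        filter_upwards [hnull] with y hxy
        rw [edist_dist, ENNReal.ofReal_rpow_of_pos (by positivity)]
    _ = ∫⁻ l in Ioi 0, μ {y | l ≤ dist x y ^ (-t)} :=
        lintegral_eq_lintegral_meas_le μ (.of_forall fun y ↦ by positivity) (by fun_prop)
    _ ≤ (∫⁻ l in Ioc 0 (δ ^ (-t)), μ {y | l ≤ dist x y ^ (-t)}) +
          ∫⁻ l in Ioi (δ ^ (-t)), μ {y | l ≤ dist x y ^ (-t)} := by
        rw [← Ioc_union_Ioi_eq_Ioi (Real.rpow_pos_of_pos hδ _).le]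
        exact lintegral_union_le _ _ _
    _ ≤ (∫⁻ _ in Ioc 0 (δ ^ (-t)), μ univ) +
          ∫⁻ l in Ioi (δ ^ (-t)), C * ENNReal.ofReal (l ^ (-s / t)) := by
        refine add_le_add (lintegral_mono fun l ↦ measure_mono (subset_univ _)) ?_
        exact setLIntegral_mono (by fun_prop) hlevel
    _ = ENNReal.ofReal (δ ^ (-t)) * μ univ +
          C * ENNReal.ofReal (t / (s - t) * δ ^ (s - t)) := by
        rw [setLIntegral_const, Real.volume_Ioc, sub_zero, mul_comm, lintegral_const_mul' _ _ hC,
          htail]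

theorem rieszPotential_ne_top_of_measure_closedBall_le [OpensMeasurableSpace X] [IsFiniteMeasure μ]
    (ht : 0 < t) (hts : t < s) (hC : C ≠ ∞)
    (hμ : ∀ᶠ r in 𝓝[>] 0, μ (closedBall x r) ≤ C * ENNReal.ofReal (r ^ s)) :
    rieszPotential t μ x ≠ ∞ := by
  obtain ⟨δ, hδ, hμδ⟩ := mem_nhdsGT_iff_exists_Ioc_subset.1 hμ
  exact ne_top_of_le_ne_top (by finiteness)
    (rieszPotential_le_of_measure_closedBall_le ht hts hδ hC fun r hr ↦ hμδ hr)

end Growth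

end RieszPotential

section Density

theorem ediam_closedBall_le_ofReal {X : Type*} [PseudoMetricSpace X] (x : X) (r : ℝ) :
    ediam (closedBall x r) ≤ ENNReal.ofReal (2 * r) := by
  refine ediam_le_of_forall_dist_le fun y hy z hz ↦ ?_
  linarith [dist_triangle_right y z x, mem_closedBall.1 hy, mem_closedBall.1 hz]

variable {X : Type*} [MeasurableSpace X] {μ : Measure X} {A : Set X} {s : ℝ}

theorem exists_countable_closedBall_cover_of_le_measure [PseudoMetricSpace X]
    [OpensMeasurableSpace X] [SecondCountableTopology X] {c : ℝ≥0∞} {δ : ℝ}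
    (hA : ∀ x ∈ A, ∃ r ∈ Ioc 0 δ, c * ENNReal.ofReal (r ^ s) ≤ μ (closedBall x r)) :
    ∃ u : Set (X × ℝ), u.Countable ∧ (∀ p ∈ u, p.2 ∈ Ioc 0 δ) ∧
      A ⊆ ⋃ p : u, closedBall p.1.1 (5 * p.1.2) ∧
      c * ∑' p : u, ENNReal.ofReal (p.1.2 ^ s) ≤ μ univ := by
  obtain ⟨u, hut, hdisj, hcover⟩ := Vitali.exists_disjoint_subfamily_covering_enlargement_closedBall
    {p : X × ℝ | p.2 ∈ Ioc 0 δ ∧ c * ENNReal.ofReal (p.2 ^ s) ≤ μ (closedBall p.1 p.2)}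
    Prod.fst Prod.snd δ (fun p hp ↦ hp.1.2) 5 (by norm_num)
  have hu : u.Countable := hdisj.countable_of_nonempty_interior fun p hp ↦
    ⟨p.1, ball_subset_interior_closedBall (mem_ball_self (hut hp).1.1)⟩
  have := hu.to_subtype
  refine ⟨u, hu, fun p hp ↦ (hut hp).1, fun x hx ↦ ?_, ?_⟩
  · obtain ⟨r, hr, hle⟩ := hA x hx
    obtain ⟨p, hp, hsub⟩ := hcover (x, r) ⟨hr, hle⟩
    exact mem_iUnion.2 ⟨⟨p, hp⟩, hsub (mem_closedBall_self hr.1.le)⟩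
  · calc c * ∑' p : u, ENNReal.ofReal (p.1.2 ^ s)
        = ∑' p : u, c * ENNReal.ofReal (p.1.2 ^ s) := ENNReal.tsum_mul_left.symm
      _ ≤ ∑' p : u, μ (closedBall p.1.1 p.1.2) := ENNReal.tsum_le_tsum fun p ↦ (hut p.2).2
      _ ≤ μ (⋃ p : u, closedBall p.1.1 p.1.2) := tsum_meas_le_meas_iUnion_of_disjoint μ
          (fun _ ↦ isClosed_closedBall.measurableSet) (hdisj.subtype _ _)
      _ ≤ μ univ := measure_mono (subset_univ _)

variable [MetricSpace X] [BorelSpace X] [SecondCountableTopology X]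

theorem mul_hausdorffMeasure_le_of_frequently_le_measure_closedBall (hs : 0 ≤ s) (c : ℝ≥0)
    (hA : ∀ x ∈ A, ∃ᶠ r in 𝓝[>] 0, c * ENNReal.ofReal (r ^ s) ≤ μ (closedBall x r)) :
    c * μH[s] A ≤ ENNReal.ofReal (10 ^ s) * μ univ := by
  obtain rfl | hc := eq_or_ne c 0
  · simp
  obtain ⟨δ, -, hδ₀, hδ⟩ := exists_seq_strictAnti_tendsto (0 : ℝ)
  have hscale : ∀ n, ∀ x ∈ A, ∃ r ∈ Ioc 0 (δ n),
      c * ENNReal.ofReal (r ^ s) ≤ μ (closedBall x r) := fun n x hx ↦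
    ((hA x hx).and_eventually (Ioc_mem_nhdsGT (hδ₀ n))).exists.imp fun _ h ↦ ⟨h.2, h.1⟩
  choose u hu hradius hcover hsum using fun n ↦
    exists_countable_closedBall_cover_of_le_measure (hscale n)
  have := fun n ↦ (hu n).to_subtype
  have hterm (n : ℕ) : ∑' p : u n, ediam (closedBall p.1.1 (5 * p.1.2)) ^ s ≤
      ENNReal.ofReal (10 ^ s) * (μ univ / c) := by
    calc ∑' p : u n, ediam (closedBall p.1.1 (5 * p.1.2)) ^ s
        ≤ ∑' p : u n, ENNReal.ofReal (2 * (5 * p.1.2)) ^ s := by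
          gcongr
          exact ediam_closedBall_le_ofReal _ _
      _ = ∑' p : u n, ENNReal.ofReal (10 ^ s) * ENNReal.ofReal (p.1.2 ^ s) := by
          refine tsum_congr fun p ↦ ?_
          have hp : 0 < p.1.2 := (hradius n p.1 p.2).1
          rw [ENNReal.ofReal_rpow_of_pos (by positivity), ← ENNReal.ofReal_mul (by positivity),
            ← Real.mul_rpow (by norm_num) hp.le, ← mul_assoc]
          norm_num
      _ = ENNReal.ofReal (10 ^ s) * ∑' p : u n, ENNReal.ofReal (p.1.2 ^ s) := ENNReal.tsum_mul_left
      _ ≤ ENNReal.ofReal (10 ^ s) * (μ univ / c) := by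
          gcongr
          rw [ENNReal.le_div_iff_mul_le (by simp [hc]) (by simp), mul_comm]
          exact hsum n
  have hδ_ediam : Tendsto (fun n ↦ ENNReal.ofReal (2 * (5 * δ n))) atTop (𝓝 0) := by
    simpa using ENNReal.tendsto_ofReal ((hδ.const_mul 5).const_mul 2)
  refine ENNReal.mul_le_of_le_div' ?_
  calc μH[s] A ≤ liminf (fun n ↦ ∑' p : u n, ediam (closedBall p.1.1 (5 * p.1.2)) ^ s) atTop := by
        refine Measure.hausdorffMeasure_le_liminf_tsum s A _ hδ_ediam _
          (.of_forall fun n p ↦ (ediam_closedBall_le_ofReal _ _).trans ?_) (.of_forall hcover)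
        gcongr
        exact (hradius n p.1 p.2).2
    _ ≤ liminf (fun _ : ℕ ↦ ENNReal.ofReal (10 ^ s) * (μ univ / c)) atTop :=
        liminf_le_liminf (.of_forall hterm)
    _ = ENNReal.ofReal (10 ^ s) * μ univ / c := by rw [liminf_const, mul_div_assoc]

theorem ae_eventually_measure_closedBall_le [IsFiniteMeasure μ] (hs : 0 ≤ s) (hμ : μ ≪ μH[s]) :
    ∀ᵐ x ∂μ, ∃ M : ℕ, ∀ᶠ r in 𝓝[>] 0, μ (closedBall x r) ≤ M * ENNReal.ofReal (r ^ s) := by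
  refine ae_iff.2 (hμ ?_)
  by_contra hpos
  obtain ⟨M, hM⟩ := ENNReal.exists_nat_mul_gt hpos
    (show ENNReal.ofReal (10 ^ s) * μ univ ≠ ∞ by finiteness)
  refine hM.not_ge (mul_hausdorffMeasure_le_of_frequently_le_measure_closedBall hs M fun x hx ↦ ?_)
  simp only [mem_ofPred_eq, not_exists, not_eventually, not_le] at hx
  exact (hx M).mono fun _ ↦ le_of_lt

theorem ae_rieszPotential_ne_top [IsFiniteMeasure μ] {t : ℝ} (ht : 0 < t) (hts : t < s)
    (hμ : μ ≪ μH[s]) : ∀ᵐ x ∂μ, rieszPotential t μ x ≠ ∞ := by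
  filter_upwards [ae_eventually_measure_closedBall_le (ht.trans hts).le hμ] with x ⟨M, hM⟩
  exact rieszPotential_ne_top_of_measure_closedBall_le ht hts (ENNReal.natCast_ne_top M) hM

end Density

section Projection

theorem ae_ae_rieszPotential_map_ne_top {Ω X Y : Type*} [MeasurableSpace Ω] {P : Measure Ω}
    [SFinite P] [PseudoEMetricSpace X] [MeasurableSpace X] {μ : Measure X} [SFinite μ]
    [PseudoEMetricSpace Y] [MeasurableSpace Y] [OpensMeasurableSpace Y] [SecondCountableTopology Y]
    {π : Ω → X → Y} (hπ : Measurable (Function.uncurry π)) {t : ℝ} {C : ℝ≥0∞} (hC : C ≠ ∞)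
    (hπt : ∀ x y, ∫⁻ ω, edist (π ω x) (π ω y) ^ (-t) ∂P ≤ C * edist x y ^ (-t))
    (hμ : ∀ᵐ x ∂μ, rieszPotential t μ x ≠ ∞) :
    ∀ᵐ ω ∂P, ∀ᵐ x ∂μ, rieszPotential t (μ.map (π ω)) (π ω x) ≠ ∞ := by
  have hkernel : Measurable fun q : (X × Ω) × X ↦ edist (π q.1.2 q.1.1) (π q.1.2 q.2) ^ (-t) := by
    have h₁ : Measurable fun q : (X × Ω) × X ↦ π q.1.2 q.1.1 :=
      hπ.comp (measurable_fst.snd.prodMk measurable_fst.fst)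
    have h₂ : Measurable fun q : (X × Ω) × X ↦ π q.1.2 q.2 :=
      hπ.comp (measurable_fst.snd.prodMk measurable_snd)
    exact (h₁.edist h₂).pow_const _
  have hpotential : Measurable fun q : X × Ω ↦ rieszPotential t (μ.map (π q.2)) (π q.2 q.1) := by
    simp only [rieszPotential_map t μ hπ.of_uncurry_left]
    exact hkernel.lintegral_prod_right'
  refine (Measure.ae_ae_comm (p := fun x ω ↦ rieszPotential t (μ.map (π ω)) (π ω x) ≠ ∞)
    ((measurableSet_singleton ∞).compl.preimage hpotential)).1 ?_
  filter_upwards [hμ] with x hx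
  have hfubini : ∫⁻ ω, rieszPotential t (μ.map (π ω)) (π ω x) ∂P ≤ C * rieszPotential t μ x := by
    calc ∫⁻ ω, rieszPotential t (μ.map (π ω)) (π ω x) ∂P
        = ∫⁻ ω, ∫⁻ y, edist (π ω x) (π ω y) ^ (-t) ∂μ ∂P := by
          simp only [rieszPotential_map t μ hπ.of_uncurry_left]
      _ = ∫⁻ y, ∫⁻ ω, edist (π ω x) (π ω y) ^ (-t) ∂P ∂μ :=
          lintegral_lintegral_swap (hkernel.comp
            ((measurable_const.prodMk measurable_fst).prodMk measurable_snd)).aemeasurable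
      _ ≤ ∫⁻ y, C * edist x y ^ (-t) ∂μ := lintegral_mono (hπt x)
      _ = C * rieszPotential t μ x := lintegral_const_mul' _ _ hC
  filter_upwards [ae_lt_top (hpotential.comp measurable_prodMk_left)
    (ne_top_of_le_ne_top (by finiteness) hfubini)] with ω hω using hω.ne

end Projection

section DualProjection

-- Average `ρ (K ∩ ℓ⁻¹' J)` over the translations by `τ • e`, `0 ≤ τ ≤ 1`: the translates stay in
-- `K'`, and a point `v` lies only in those with `ℓ v - τ * ℓ e ∈ J`.
theorem measure_inter_preimage_le_mul_volume {V : Type*} [NormedAddCommGroup V] [NormedSpace ℝ V]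
    [MeasurableSpace V] [BorelSpace V] [SecondCountableTopology V] {ρ : Measure V} [SFinite ρ]
    [ρ.IsAddRightInvariant] (ℓ : V →L[ℝ] ℝ) {e : V} (he : ℓ e ≠ 0) {K K' : Set V}
    (hK : MeasurableSet K) (hKK' : ∀ v ∈ K, ∀ τ ∈ Icc (0 : ℝ) 1, v + τ • e ∈ K') {J : Set ℝ}
    (hJ : MeasurableSet J) :
    ρ (K ∩ ℓ ⁻¹' J) ≤ ρ K' * (ENNReal.ofReal |(ℓ e)⁻¹| * volume J) := by
  have hS : MeasurableSet (K ∩ ℓ ⁻¹' J) := hK.inter (hJ.preimage ℓ.measurable)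
  let T : Set (ℝ × V) := {q | q.1 ∈ Icc 0 1 ∧ q.2 - q.1 • e ∈ K ∩ ℓ ⁻¹' J}
  have hT : MeasurableSet T := (measurableSet_Icc.preimage measurable_fst).inter
    (hS.preimage (by fun_prop : Measurable fun q : ℝ × V ↦ q.2 - q.1 • e))
  have hsection (v : V) : volume ((fun τ ↦ (τ, v)) ⁻¹' T) ≤
      K'.indicator (fun _ ↦ ENNReal.ofReal |(ℓ e)⁻¹| * volume J) v := by
    by_cases hv : v ∈ K'
    · calc volume ((fun τ ↦ (τ, v)) ⁻¹' T)
          ≤ volume ((· * ℓ e) ⁻¹' ((ℓ v - ·) ⁻¹' J)) :=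
            measure_mono fun τ hτ ↦ by simpa using hτ.2.2
        _ = K'.indicator (fun _ ↦ ENNReal.ofReal |(ℓ e)⁻¹| * volume J) v := by
            rw [Real.volume_preimage_mul_right he, indicator_of_mem hv,
              (Measure.measurePreserving_sub_left volume (ℓ v)).measure_preimage
                hJ.nullMeasurableSet]
    · have hempty : (fun τ ↦ (τ, v)) ⁻¹' T = ∅ := eq_empty_of_forall_notMem fun τ hτ ↦
        hv (by simpa using hKK' _ hτ.2.1 τ hτ.1)
      simp [hempty]
  calc ρ (K ∩ ℓ ⁻¹' J) = ∫⁻ τ in Icc (0 : ℝ) 1, ρ ((· - τ • e) ⁻¹' (K ∩ ℓ ⁻¹' J)) := by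
        simp only [sub_eq_add_neg, measure_preimage_add_right, setLIntegral_const, Real.volume_Icc]
        simp
    _ ≤ ∫⁻ τ in Icc (0 : ℝ) 1, ρ (Prod.mk τ ⁻¹' T) :=
        setLIntegral_mono' measurableSet_Icc fun τ hτ ↦ measure_mono fun v hv ↦ ⟨hτ, hv⟩
    _ ≤ ∫⁻ τ, ρ (Prod.mk τ ⁻¹' T) := setLIntegral_le_lintegral _ _
    _ = ∫⁻ v, volume ((fun τ ↦ (τ, v)) ⁻¹' T) ∂ρ := by
        rw [← Measure.prod_apply hT, Measure.prod_apply_symm hT]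
    _ ≤ ∫⁻ v, K'.indicator (fun _ ↦ ENNReal.ofReal |(ℓ e)⁻¹| * volume J) v ∂ρ :=
        lintegral_mono hsection
    _ ≤ ρ K' * (ENNReal.ofReal |(ℓ e)⁻¹| * volume J) :=
        (lintegral_indicator_const_le _ _).trans_eq (mul_comm _ _)

theorem dimH_image_le_min_one {X : Type*} [EMetricSpace X] [MeasurableSpace X] [BorelSpace X]
    {f : X → ℝ} {K s : ℝ≥0} (hf : LipschitzWith K f) {F : Set X} (hF : μH[s] F ≠ ∞) :
    dimH (f '' F) ≤ min (s : ℝ≥0∞) 1 :=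
  le_min ((hf.dimH_image_le F).trans (dimH_le_of_hausdorffMeasure_ne_top hF))
    ((dimH_mono (subset_univ _)).trans_eq Real.dimH_univ)

section InnerProductSpace

variable {V : Type*} [NormedAddCommGroup V] [InnerProductSpace ℝ V]

/-- The dual projection `(a, b) ↦ a · u + b` as a continuous linear functional, for any real inner
product space `V` in place of `ℝ^{n−1}`. -/
noncomputable def dualProjCLM (u : V) : V × ℝ →L[ℝ] ℝ :=
  (innerSL ℝ u).coprod (ContinuousLinearMap.id ℝ ℝ)

theorem dualProjCLM_apply (u : V) (p : V × ℝ) : dualProjCLM u p = ⟪p.1, u⟫ + p.2 := by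
  simp [dualProjCLM, real_inner_comm]

theorem dualProj_eq_dualProjCLM {n : ℕ} (u : EuclideanSpace ℝ (Fin (n - 1))) :
    dualProj u = dualProjCLM u :=
  funext fun p ↦ (dualProjCLM_apply u p).symm

theorem norm_le_of_abs_dualProjCLM_le {u : V} {R r : ℝ} (hR : 1 ≤ R) (hu : ‖u‖ ≤ R) {p : V × ℝ}
    (hr : |dualProjCLM u p| ≤ r) (hrp : 2 * r ≤ ‖p‖) : ‖p‖ ≤ 2 * R * ‖p.1‖ := by
  have hinner : |⟪p.1, u⟫| ≤ ‖p.1‖ * R := (abs_real_inner_le_norm _ _).trans (by gcongr)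
  have hsnd : |p.2| ≤ r + ‖p.1‖ * R := by
    rw [dualProjCLM_apply] at hr
    have := abs_sub (⟪p.1, u⟫ + p.2) ⟪p.1, u⟫
    rw [add_sub_cancel_left] at this
    linarith
  obtain h | h := max_choice ‖p.1‖ ‖p.2‖ <;> rw [Prod.norm_def, h] at hrp ⊢
  · nlinarith [norm_nonneg p.1]
  · rw [Real.norm_eq_abs] at hrp ⊢
    linarith

end InnerProductSpace

variable {V : Type*} [NormedAddCommGroup V] [InnerProductSpace ℝ V] [FiniteDimensional ℝ V]
  [MeasurableSpace V] [BorelSpace V]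

theorem measurable_uncurry_dualProjCLM :
    Measurable (Function.uncurry fun (u : V) (p : V × ℝ) ↦ dualProjCLM u p) := by
  simp only [Function.uncurry_def, dualProjCLM_apply]
  fun_prop

theorem volume_closedBall_inter_abs_inner_add_le {a : V} (ha : a ≠ 0) (b R r : ℝ) :
    volume (closedBall (0 : V) R ∩ {u | |⟪a, u⟫ + b| ≤ r}) ≤
      volume (closedBall (0 : V) (R + 1)) * ENNReal.ofReal (2 * r / ‖a‖) := by
  have hslab : {u | |⟪a, u⟫ + b| ≤ r} = innerSL ℝ a ⁻¹' closedBall (-b) r := by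
    ext u
    simp [Real.dist_eq]
  have hunit : innerSL ℝ a (‖a‖⁻¹ • a) = ‖a‖ := by
    simp [pow_two, ha]
  have htranslate : ∀ v ∈ closedBall (0 : V) R, ∀ τ ∈ Icc (0 : ℝ) 1,
      v + τ • ‖a‖⁻¹ • a ∈ closedBall (0 : V) (R + 1) := by
    intro v hv τ hτ
    rw [mem_closedBall_zero_iff] at hv ⊢
    refine (norm_add_le _ _).trans (add_le_add hv ?_)
    simpa [norm_smul, ha, abs_of_nonneg hτ.1] using hτ.2
  rw [hslab]
  refine (measure_inter_preimage_le_mul_volume (innerSL ℝ a) (e := ‖a‖⁻¹ • a) ?_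
    measurableSet_closedBall htranslate measurableSet_closedBall).trans_eq ?_
  · simpa [hunit] using ha
  · rw [hunit, Real.volume_closedBall, abs_of_nonneg (by positivity),
      ← ENNReal.ofReal_mul (by positivity), inv_mul_eq_div]

theorem volume_closedBall_inter_abs_dualProjCLM_le {p : V × ℝ} (hp : p ≠ 0) {R r : ℝ}
    (hR : 1 ≤ R) (hr : 0 ≤ r) :
    volume (closedBall (0 : V) R ∩ {u | |dualProjCLM u p| ≤ r}) ≤
      volume (closedBall (0 : V) (R + 1)) * ENNReal.ofReal (4 * R * r / ‖p‖) := by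
  have hp₀ : 0 < ‖p‖ := norm_pos_iff.2 hp
  obtain hlarge | hsmall := lt_or_ge ‖p‖ (2 * r)
  · refine (measure_mono (inter_subset_left.trans (closedBall_subset_closedBall (by simp)))).trans
      (le_mul_of_one_le_right' ?_)
    rw [ENNReal.one_le_ofReal, one_le_div hp₀]
    nlinarith
  obtain hempty | ⟨u, hu, hur⟩ :=
    (closedBall (0 : V) R ∩ {u | |dualProjCLM u p| ≤ r}).eq_empty_or_nonempty
  · simp [hempty]
  have hnorm := norm_le_of_abs_dualProjCLM_le hR (mem_closedBall_zero_iff.1 hu) hur hsmall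
  have ha : p.1 ≠ 0 := fun h ↦ hp₀.not_ge (by simpa [h] using hnorm)
  simp only [dualProjCLM_apply]
  refine (volume_closedBall_inter_abs_inner_add_le ha p.2 R r).trans ?_
  gcongr _ * ENNReal.ofReal ?_
  rw [div_le_div_iff₀ (norm_pos_iff.2 ha) hp₀]
  nlinarith

theorem lintegral_enorm_dualProjCLM_rpow_le (p : V × ℝ) {R t : ℝ} (hR : 1 ≤ R) (ht : 0 < t)
    (ht₁ : t < 1) :
    ∫⁻ u in closedBall (0 : V) R, ‖dualProjCLM u p‖ₑ ^ (-t) ≤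
      volume (closedBall (0 : V) (R + 1)) * (1 + ENNReal.ofReal (4 * R * (t / (1 - t)))) *
        ‖p‖ₑ ^ (-t) := by
  set L := volume (closedBall (0 : V) (R + 1))
  have hL₀ : L ≠ 0 := (measure_closedBall_pos _ _ (by positivity)).ne'
  have hL : L ≠ ∞ := measure_closedBall_lt_top.ne
  obtain rfl | hp := eq_or_ne p 0
  · simp [ENNReal.zero_rpow_of_neg (neg_neg_of_pos ht), hL₀]
  have hp₀ : 0 < ‖p‖ := norm_pos_iff.2 hp
  have hmeas : Measurable fun u : V ↦ dualProjCLM u p :=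
    measurable_uncurry_dualProjCLM.of_uncurry_right
  set m := (volume.restrict (closedBall (0 : V) R)).map fun u ↦ dualProjCLM u p
  have hm : m univ ≤ L := by
    rw [Measure.map_apply hmeas .univ, preimage_univ, Measure.restrict_apply_univ]
    exact measure_mono (closedBall_subset_closedBall (by simp))
  have hgrowth : ∀ r ∈ Ioc 0 ‖p‖, m (closedBall 0 r) ≤
      L * ENNReal.ofReal (4 * R / ‖p‖) * ENNReal.ofReal (r ^ (1 : ℝ)) := by
    intro r hr
    rw [Measure.map_apply hmeas measurableSet_closedBall,
      Measure.restrict_apply (hmeas measurableSet_closedBall), inter_comm, mul_assoc,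
      ← ENNReal.ofReal_mul (by positivity), Real.rpow_one, div_mul_eq_mul_div]
    simpa [preimage] using volume_closedBall_inter_abs_dualProjCLM_le hp hR hr.1.le
  calc ∫⁻ u in closedBall (0 : V) R, ‖dualProjCLM u p‖ₑ ^ (-t) = rieszPotential t m 0 := by
        simp only [m, rieszPotential_map t _ hmeas, edist_eq_enorm_sub, zero_sub, enorm_neg]
    _ ≤ ENNReal.ofReal (‖p‖ ^ (-t)) * m univ + L * ENNReal.ofReal (4 * R / ‖p‖) *
          ENNReal.ofReal (t / (1 - t) * ‖p‖ ^ (1 - t)) :=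
        rieszPotential_le_of_measure_closedBall_le ht ht₁ hp₀ (by finiteness) hgrowth
    _ = ENNReal.ofReal (‖p‖ ^ (-t)) * m univ + L * (ENNReal.ofReal (4 * R * (t / (1 - t))) *
          ENNReal.ofReal (‖p‖ ^ (-t))) := by
        rw [mul_assoc L, ← ENNReal.ofReal_mul (by positivity),
          ← ENNReal.ofReal_mul' (by positivity), sub_eq_add_neg 1 t, Real.rpow_add hp₀,
          Real.rpow_one]
        congr 3
        field_simp
    _ ≤ ENNReal.ofReal (‖p‖ ^ (-t)) * L + L * (ENNReal.ofReal (4 * R * (t / (1 - t))) *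
          ENNReal.ofReal (‖p‖ ^ (-t))) := by gcongr
    _ = L * (1 + ENNReal.ofReal (4 * R * (t / (1 - t)))) * ‖p‖ₑ ^ (-t) := by
        rw [← ofReal_norm, ENNReal.ofReal_rpow_of_pos hp₀]
        ring

theorem ae_forall_le_dimH_image_dualProjCLM {μ : Measure (V × ℝ)} [IsFiniteMeasure μ] {t : ℝ≥0}
    (ht : 0 < t) (ht₁ : t < 1) (hμ : ∀ᵐ x ∂μ, rieszPotential t μ x ≠ ∞) :
    ∀ᵐ u : V, ∀ F, μ F ≠ 0 → t ≤ dimH (dualProjCLM u '' F) := by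
  have hball (N : ℕ) : ∀ᵐ u ∂volume.restrict (closedBall (0 : V) (N + 1)),
      ∀ᵐ x ∂μ, rieszPotential t (μ.map (dualProjCLM u)) (dualProjCLM u x) ≠ ∞ := by
    have hfinite := measure_closedBall_lt_top (μ := volume) (x := (0 : V)) (r := N + 1 + 1)
    refine ae_ae_rieszPotential_map_ne_top measurable_uncurry_dualProjCLM
      (ENNReal.mul_ne_top hfinite.ne (b := 1 + ENNReal.ofReal (4 * (N + 1) * (t / (1 - t))))
        (by finiteness)) (fun x y ↦ ?_) hμ
    simp only [edist_eq_enorm_sub, ← map_sub]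
    exact lintegral_enorm_dualProjCLM_rpow_le (x - y) (by simp) ht (NNReal.coe_lt_one.2 ht₁)
  have hcover : ⋃ N : ℕ, closedBall (0 : V) (N + 1) = univ :=
    univ_subset_iff.1 ((iUnion_closedBall_nat (0 : V)).ge.trans
      (iUnion_mono fun N ↦ closedBall_subset_closedBall (by simp)))
  have hall := (ae_restrict_iUnion_iff _ _).2 hball
  rw [hcover, Measure.restrict_univ] at hall
  filter_upwards [hall] with u hu F hF
  exact le_dimH_image_of_ae_rieszPotential_map_ne_top (dualProjCLM u).measurable hF hu

theorem strong_dualProj_dimension_general {s : ℝ≥0} {E : Set (V × ℝ)} (hE : μH[s] E ≠ ∞) :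
    ∀ᵐ u : V, ∀ F ⊆ E, μH[s] F ≠ 0 → dimH (dualProjCLM u '' F) = min (s : ℝ≥0∞) 1 := by
  have hupper (u : V) (F) (hF : F ⊆ E) : dimH (dualProjCLM u '' F) ≤ min (s : ℝ≥0∞) 1 :=
    dimH_image_le_min_one (dualProjCLM u).lipschitz (measure_ne_top_of_subset hF hE)
  obtain rfl | hs := eq_zero_or_pos s
  · exact .of_forall fun u F hF _ ↦ le_antisymm (hupper u F hF) (by simp)
  obtain ⟨t, -, ht, htlim⟩ := exists_seq_strictMono_tendsto' (lt_min hs one_pos)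
  have : IsFiniteMeasure (μH[s].restrict E) := ⟨by simpa using hE.lt_top⟩
  have hlower (k : ℕ) : ∀ᵐ u : V,
      ∀ F, μH[s].restrict E F ≠ 0 → t k ≤ dimH (dualProjCLM u '' F) :=
    ae_forall_le_dimH_image_dualProjCLM (ht k).1 (lt_min_iff.1 (ht k).2).2
      (ae_rieszPotential_ne_top (ht k).1 (NNReal.coe_lt_coe.2 (lt_min_iff.1 (ht k).2).1)
        Measure.absolutelyContinuous_restrict)
  filter_upwards [ae_all_iff.2 hlower] with u hu F hF hF₀
  have hrestrict : μH[s].restrict E F ≠ 0 := by rwa [Measure.restrict_eq_self _ hF]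
  refine le_antisymm (hupper u F hF) ?_
  simpa using le_of_tendsto' (ENNReal.tendsto_coe.2 htlim) fun k ↦ hu k F hrestrict

end DualProjection

end

/-- **Strong projection theorem for the dual maps `π_u`, dimension part.**
If `E ⊆ ℝⁿ = ℝ^{n−1} × ℝ` is `𝓗ˢ`-measurable with `0 < 𝓗ˢ(E) < ∞` where
`s = dim_H E > 0`, then there is a Lebesgue null set `X ⊆ ℝ^{n−1}` such that for every
`u ∉ X` and every `𝓗ˢ`-measurable `F ⊆ E` with `𝓗ˢ(F) > 0`,
`dim_H π_u(F) = min {s, 1}`. -/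
theorem strong_dualProj_dimension (n : ℕ) (hn : 2 ≤ n) (s : ℝ) (hs : 0 < s)
    (E : Set (EuclideanSpace ℝ (Fin (n - 1)) × ℝ))
    (hdimE : dimH E = ENNReal.ofReal s)
    (hE : NullMeasurableSet E μH[s])
    (hE0 : 0 < μH[s] E) (hEfin : μH[s] E < ⊤) :
    ∃ X : Set (EuclideanSpace ℝ (Fin (n - 1))), volume X = 0 ∧
      ∀ u : EuclideanSpace ℝ (Fin (n - 1)), u ∉ X →
        ∀ F : Set (EuclideanSpace ℝ (Fin (n - 1)) × ℝ), F ⊆ E →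
          NullMeasurableSet F μH[s] → 0 < μH[s] F →
          dimH (dualProj u '' F) = min (ENNReal.ofReal s) 1 := by
  lift s to NNReal using hs.le
  exact ⟨_, ae_iff.1 (strong_dualProj_dimension_general hEfin.ne), fun u hu F hFE _ hF ↦ by
    simpa [dualProj_eq_dualProjCLM] using not_not.1 hu F hFE hF.ne'⟩
end
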